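/- arXiv:math/0204120 — 5 statements merged into one kernel-verified Lean document; each statement's English description precedes it below -/
import Mathlib

section
/- For an abelian group G, the space G^# is paracompact if and only if G is countable. -/
open scoped Pointwise

/-- The Bohr topology on an abelian group `G`: the initial topology induced by the
family of all group homomorphisms from `G` to the circle group `ℝ/ℤ`. -/
noncomputable def bohrTopology (G : Type*) [AddCommGroup G] : TopologicalSpace G :=
  ⨅ χ : G →+ AddCircle (1 : ℝ), TopologicalSpace.induced χ inferInstance

/-!
Evaluation at all characters embeds `G^#` into a power of the circle, hence densely into a compact
group. Haar measure shows that compact groups satisfy the countable chain condition, and dense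
subspaces inherit it, so `G^#` is paracompact only if it is Lindelöf. But `G^#` is Lindelöf only if
`G` is countable: an uncountable `G` contains a direct sum of uncountably many copies of a nonzero
cyclic group, and, because characters extend from subgroups and separate points, the generators of
the summands form a closed discrete set. Conversely, countable spaces are Lindelöf, and
regular Lindelöf spaces are paracompact.
-/

open Set Topology MeasureTheory

universe u v

section Lindelof

variable {X : Type*} [TopologicalSpace X]

theorem countable_of_locallyFinite_of_nonempty [LindelofSpace X] {ι : Type*} {s : ι → Set X}
    (hs : LocallyFinite s) (hne : ∀ i, (s i).Nonempty) : Countable ι := by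
  choose U hU hfin using hs
  obtain ⟨t, ht, hcover⟩ := countable_cover_nhds hU
  refine countable_univ_iff.1 ((ht.biUnion fun x _ ↦ (hfin x).countable).mono fun i _ ↦ ?_)
  obtain ⟨x, hx⟩ := hne i
  obtain ⟨y, hy, hxy⟩ := mem_iUnion₂.1 (hcover ▸ mem_univ x)
  exact mem_iUnion₂.2 ⟨y, hy, x, hx, hxy⟩

section Sdiff

variable {A B : ℕ → Set X}

theorem iUnion_sdiff_biUnion_closure_eq_univ (hAB : ∀ n, closure (A n) ⊆ B n)
    (hA : ⋃ n, A n = univ) : ⋃ n, B n \ ⋃ m < n, closure (A m) = univ := by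
  classical
  refine eq_univ_of_forall fun x ↦ mem_iUnion.2 ?_
  obtain ⟨k, hk⟩ := mem_iUnion.1 (hA ▸ mem_univ x)
  have hex : ∃ n, x ∈ B n := ⟨k, hAB k (subset_closure hk)⟩
  refine ⟨Nat.find hex, Nat.find_spec hex, fun hx ↦ ?_⟩
  obtain ⟨m, hm, hxm⟩ := mem_iUnion₂.1 hx
  exact Nat.find_min hex hm (hAB m hxm)

theorem locallyFinite_sdiff_biUnion_closure (hAo : ∀ n, IsOpen (A n)) (hA : ⋃ n, A n = univ) :
    LocallyFinite fun n ↦ B n \ ⋃ m < n, closure (A m) := by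
  intro x
  obtain ⟨k, hk⟩ := mem_iUnion.1 (hA ▸ mem_univ x)
  refine ⟨A k, (hAo k).mem_nhds hk, (finite_Iic k).subset ?_⟩
  rintro n ⟨y, ⟨-, hy⟩, hyk⟩
  exact not_lt.1 fun hkn ↦ hy (mem_iUnion₂.2 ⟨k, hkn, subset_closure hyk⟩)

end Sdiff

theorem paracompactSpace_of_lindelofSpace_of_regularSpace [LindelofSpace X] [RegularSpace X] :
    ParacompactSpace X := by
  cases isEmpty_or_nonempty X
  · infer_instance
  refine ⟨fun α s hso hs ↦ ?_⟩
  choose a ha using fun x ↦ mem_iUnion.1 (hs ▸ mem_univ x)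
  choose A hA hAs using fun x ↦
    (hasBasis_opens_closure x).mem_iff.1 ((hso (a x)).mem_nhds (ha x))
  obtain ⟨x, hx⟩ := isLindelof_univ.indexed_countable_subcover A (fun x ↦ (hA x).2)
    fun x _ ↦ mem_iUnion.2 ⟨x, (hA x).1⟩
  have hcover : ⋃ n, A (x n) = univ := univ_subset_iff.1 hx
  let t (n : ℕ) : Set X := s (a (x n)) \ ⋃ m < n, closure (A (x m))
  have ht_open (n : ℕ) : IsOpen (t n) :=
    (hso _).sdiff ((finite_Iio n).isClosed_biUnion fun _ _ ↦ isClosed_closure)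
  have ht_cover : ⋃ n, t n = univ :=
    iUnion_sdiff_biUnion_closure_eq_univ (fun n ↦ hAs (x n)) hcover
  have ht_finite : LocallyFinite t :=
    locallyFinite_sdiff_biUnion_closure (fun n ↦ (hA (x n)).2) hcover
  exact ⟨ULift ℕ, t ∘ ULift.down, fun n ↦ ht_open n.down,
    (ULift.down_surjective.iUnion_comp t).trans ht_cover,
    ht_finite.comp_injective ULift.down_injective, fun n ↦ ⟨a (x n.down), sdiff_subset⟩⟩

end Lindelof

/-- The countable chain condition (Suslin property): every family of pairwise disjoint open sets
is countable. Families are sets of sets, so the empty set may be a member. -/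
def CountableChainCondition (X : Type*) [TopologicalSpace X] : Prop :=
  ∀ ⦃𝒰 : Set (Set X)⦄, (∀ U ∈ 𝒰, IsOpen U) → 𝒰.PairwiseDisjoint id → 𝒰.Countable

theorem exists_maximal_pairwiseDisjoint {X : Type*} (𝒜 : Set (Set X)) :
    ∃ 𝒱, Maximal (fun 𝒱 : Set (Set X) ↦ 𝒱 ⊆ 𝒜 ∧ 𝒱.PairwiseDisjoint id) 𝒱 :=
  zorn_subset {𝒱 | 𝒱 ⊆ 𝒜 ∧ 𝒱.PairwiseDisjoint id} fun c hc hchain ↦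
    ⟨⋃₀ c, ⟨sUnion_subset fun _ h𝒱 ↦ (hc h𝒱).1,
      (pairwiseDisjoint_sUnion hchain.directedOn).2 fun _ h𝒱 ↦ (hc h𝒱).2⟩,
      fun _ ↦ subset_sUnion_of_mem⟩

namespace CountableChainCondition

variable {X Y : Type*} [TopologicalSpace X] [TopologicalSpace Y]

theorem of_isOpenPosMeasure [MeasurableSpace X] [OpensMeasurableSpace X] (μ : Measure X)
    [SFinite μ] [μ.IsOpenPosMeasure] : CountableChainCondition X := by
  intro 𝒰 hopen hdisj
  have hpos : {U : 𝒰 | 0 < μ U}.Countable :=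
    Measure.countable_meas_pos_of_disjoint_iUnion (fun U ↦ (hopen U U.2).measurableSet)
      fun U V hUV ↦ hdisj U.2 V.2 (Subtype.coe_injective.ne hUV)
  refine ((hpos.image Subtype.val).insert ∅).mono fun U hU ↦ ?_
  rcases U.eq_empty_or_nonempty with rfl | hne
  · exact mem_insert _ _
  · exact mem_insert_of_mem _ ⟨⟨U, hU⟩, (hopen U hU).measure_pos μ hne, rfl⟩

theorem of_sigmaCompact_addGroup (K : Type*) [AddGroup K] [TopologicalSpace K]
    [IsTopologicalAddGroup K] [LocallyCompactSpace K] [SigmaCompactSpace K] :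
    CountableChainCondition K := by
  borelize K
  exact of_isOpenPosMeasure (Measure.addHaar : Measure K)

theorem of_isDenseInducing (hY : CountableChainCondition Y) {f : X → Y} (hf : IsDenseInducing f) :
    CountableChainCondition X := by
  intro 𝒰 hopen hdisj
  choose! W hWo hWU using fun U hU ↦ hf.isInducing.isOpen_iff.1 (hopen U hU)
  have hinj : InjOn W 𝒰 := fun U hU V hV h ↦ by rw [← hWU U hU, h, hWU V hV]
  have hWdisj : (W '' 𝒰).PairwiseDisjoint id := by
    rintro _ ⟨U, hU, rfl⟩ _ ⟨V, hV, rfl⟩ hne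
    by_contra hmeet
    obtain ⟨x, hxU, hxV⟩ := hf.dense.exists_mem_open ((hWo U hU).inter (hWo V hV))
      (not_disjoint_iff_nonempty_inter.1 hmeet)
    have hUV : Disjoint U V := hdisj hU hV fun h ↦ hne (congrArg W h)
    exact hUV.notMem_of_mem_left ((hWU U hU).subset hxU) ((hWU V hV).subset hxV)
  exact countable_of_injective_of_countable_image hinj
    (hY (forall_mem_image.2 hWo) hWdisj)

theorem of_isInducing_addMonoidHom {G K : Type*} [AddGroup G] [TopologicalSpace G] [AddGroup K]
    [TopologicalSpace K] [IsTopologicalAddGroup K] [CompactSpace K] {f : G →+ K}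
    (hf : IsInducing f) : CountableChainCondition G := by
  let H : AddSubgroup K := f.range.topologicalClosure
  have : CompactSpace H :=
    isCompact_iff_compactSpace.1 f.range.isClosed_topologicalClosure.isCompact
  have hmem (g : G) : f g ∈ H := f.range.le_topologicalClosure ⟨g, rfl⟩
  have hdense : DenseRange (codRestrict f H hmem) :=
    Subtype.dense_iff.2 (by rw [← range_comp]; exact subset_rfl)
  exact (of_sigmaCompact_addGroup H).of_isDenseInducing ⟨hf.codRestrict hmem, hdense⟩

theorem countable_of_locallyFinite (hX : CountableChainCondition X) {ι : Type*} {s : ι → Set X}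
    (hs : LocallyFinite s) (hopen : ∀ i, IsOpen (s i)) (hne : ∀ i, (s i).Nonempty) :
    Countable ι := by
  let 𝒜 : Set (Set X) := {V | IsOpen V ∧ {i | (s i ∩ V).Nonempty}.Finite}
  obtain ⟨𝒱, ⟨h𝒱𝒜, hdisj⟩, hmax⟩ := exists_maximal_pairwiseDisjoint 𝒜
  have hmeet (i : ι) : ∃ V ∈ 𝒱, (s i ∩ V).Nonempty := by
    by_contra! hi
    obtain ⟨x, hx⟩ := hne i
    obtain ⟨N, hN, hfin⟩ := hs x
    let V := s i ∩ interior N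
    have hVne : V.Nonempty := ⟨x, hx, mem_interior_iff_mem_nhds.2 hN⟩
    have hV𝒜 : V ∈ 𝒜 := ⟨(hopen i).inter isOpen_interior, hfin.subset fun j hj ↦
      hj.mono (inter_subset_inter_right _ (inter_subset_right.trans interior_subset))⟩
    have hV𝒱 : V ∈ 𝒱 := hmax ⟨insert_subset hV𝒜 h𝒱𝒜, hdisj.insert fun U hU _ ↦
      (disjoint_iff_inter_eq_empty.2 (hi U hU)).mono_left inter_subset_left⟩
      (subset_insert V 𝒱) (mem_insert V 𝒱)
    exact (hVne.mono (subset_inter inter_subset_left subset_rfl)).ne_empty (hi V hV𝒱)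
  have h𝒱 : 𝒱.Countable := hX (fun V hV ↦ (h𝒱𝒜 hV).1) hdisj
  refine countable_univ_iff.1 ((h𝒱.biUnion fun V hV ↦ (h𝒱𝒜 hV).2.countable).mono fun i _ ↦ ?_)
  obtain ⟨V, hV, hiV⟩ := hmeet i
  exact mem_iUnion₂.2 ⟨V, hV, hiV⟩

theorem lindelofSpace [ParacompactSpace X] (hX : CountableChainCondition X) : LindelofSpace X := by
  refine ⟨isLindelof_of_countable_subcover fun {ι} U hUo hU ↦ ?_⟩
  obtain ⟨s, hso, hs, hlf, hsU⟩ := precise_refinement U hUo (univ_subset_iff.1 hU)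
  have : Countable {i | (s i).Nonempty} :=
    hX.countable_of_locallyFinite (hlf.comp_injective Subtype.val_injective) (fun i ↦ hso i)
      fun i ↦ i.2
  refine ⟨{i | (s i).Nonempty}, to_countable _, fun x _ ↦ ?_⟩
  obtain ⟨i, hi⟩ := mem_iUnion.1 (hs ▸ mem_univ x)
  exact mem_iUnion₂.2 ⟨i, ⟨x, hi⟩, hsU i hi⟩

end CountableChainCondition

section DirectSum

theorem countable_preimage_of_countable_ker {A B : Type*} [AddGroup A] [AddGroup B] (f : A →+ B)
    (hker : (f.ker : Set A).Countable) {s : Set B} (hs : s.Countable) : (f ⁻¹' s).Countable := by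
  have hfiber (b : B) : (f ⁻¹' {b}).Countable := by
    rcases (f ⁻¹' {b}).eq_empty_or_nonempty with hb | ⟨a, rfl⟩
    · exact hb ▸ countable_empty
    · refine (hker.preimage (sub_left_injective (b := a))).mono fun x (hx : f x = f a) ↦ ?_
      simp [AddMonoidHom.mem_ker, hx]
  rw [← biUnion_preimage_singleton]
  exact hs.biUnion fun b _ ↦ hfiber b

theorem exists_linearIndepOn_forall_smul_mem_span (R M : Type*) [Ring R] [Nontrivial R]
    [AddCommGroup M] [Module R M] : ∃ s : Set M, LinearIndepOn R id s ∧
      ∀ x, ∃ a : R, a ≠ 0 ∧ a • x ∈ Submodule.span R s := by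
  obtain ⟨s, hs, hmax⟩ := exists_maximal_linearIndepOn R (id : M → M)
  refine ⟨s, hs, fun x ↦ ?_⟩
  by_cases hx : x ∈ s
  · exact ⟨1, one_ne_zero, by simpa using Submodule.subset_span hx⟩
  · simpa using hmax x hx

variable {R : Type u} [CommRing R] {M : Type v} [AddCommGroup M] [Module R M]

theorem countable_torsionBy_of_forall_prime [UniqueFactorizationMonoid R]
    (h : ∀ p : R, Prime p → Countable (Submodule.torsionBy R M p)) {a : R} (ha : a ≠ 0) :
    Countable (Submodule.torsionBy R M a) := by
  induction a using UniqueFactorizationMonoid.induction_on_prime with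
  | h₁ => exact absurd rfl ha
  | h₂ a hunit =>
    have : Submodule.torsionBy R M a = ⊥ := by
      ext x
      simp [hunit.smul_eq_zero]
    rw [this]
    infer_instance
  | h₃ a p ha' hp ih =>
    refine (countable_preimage_of_countable_ker (DistribSMul.toAddMonoidHom M p)
      (h p hp).to_set (ih ha').to_set).mono fun x hx ↦ ?_
    simpa [mul_smul, smul_comm p a] using hx

theorem countable_of_linearIndepOn_of_torsionBy [Nontrivial R] [UniqueFactorizationMonoid R]
    [Countable R] (hindep : ∀ s : Set M, LinearIndepOn R id s → s.Countable)
    (htors : ∀ p : R, Prime p → Countable (Submodule.torsionBy R M p)) : Countable M := by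
  obtain ⟨s, hs, hspan⟩ := exists_linearIndepOn_forall_smul_mem_span R M
  have hs_count : Countable s := hindep s hs
  have hspan_count : (Submodule.span R s : Set M).Countable := by
    have : Countable (Submodule.span R (range ((↑) : s → M))) := inferInstance
    rwa [Subtype.range_coe] at this
  have hcount (a : {a : R // a ≠ 0}) : {x : M | a.1 • x ∈ Submodule.span R s}.Countable :=
    countable_preimage_of_countable_ker (DistribSMul.toAddMonoidHom M a.1)
      (countable_torsionBy_of_forall_prime htors a.2).to_set hspan_count
  refine countable_univ_iff.1 ((countable_iUnion hcount).mono fun x _ ↦ ?_)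
  obtain ⟨a, ha, hx⟩ := hspan x
  exact mem_iUnion.2 ⟨⟨a, ha⟩, hx⟩

theorem exists_injective_finsupp_of_uncountable_torsionBy [Countable R] (p : R)
    [(Ideal.span {p}).IsMaximal] [Uncountable (Submodule.torsionBy R M p)] :
    ∃ (ι : Type v) (f : (ι →₀ R ⧸ Ideal.span {p}) →ₗ[R] M),
      Uncountable ι ∧ Function.Injective f := by
  let := Ideal.Quotient.field (Ideal.span {p})
  let b := Module.Basis.ofVectorSpace (R ⧸ Ideal.span {p}) (Submodule.torsionBy R M p)
  refine ⟨_, (Submodule.torsionBy R M p).subtype ∘ₗ b.repr.symm.toLinearMap.restrictScalars R,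
    ?_, Subtype.val_injective.comp b.repr.symm.injective⟩
  by_contra hι
  rw [not_uncountable_iff] at hι
  have : Countable (R ⧸ Ideal.span {p}) := Ideal.Quotient.mk_surjective.countable
  exact not_countable b.repr.injective.countable

variable (R M)

theorem exists_injective_finsupp_of_uncountable [IsDomain R] [IsPrincipalIdealRing R]
    [Countable R] [Uncountable M] :
    ∃ (A : Type u) (_ : AddCommGroup A) (_ : Module R A) (ι : Type v) (f : (ι →₀ A) →ₗ[R] M),
      Nontrivial A ∧ Uncountable ι ∧ Function.Injective f := by
  by_cases hindep : ∀ s : Set M, LinearIndepOn R id s → s.Countable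
  · obtain ⟨p, hp, hunc⟩ : ∃ p : R, Prime p ∧ ¬ Countable (Submodule.torsionBy R M p) := by
      by_contra! htors
      exact not_countable (countable_of_linearIndepOn_of_torsionBy hindep htors)
    have : Uncountable (Submodule.torsionBy R M p) := not_countable_iff.1 hunc
    have : (Ideal.span {p}).IsMaximal :=
      PrincipalIdealRing.isMaximal_of_irreducible hp.irreducible
    obtain ⟨ι, f, hι, hf⟩ := exists_injective_finsupp_of_uncountable_torsionBy (M := M) p
    exact ⟨R ⧸ Ideal.span {p}, inferInstance, inferInstance, ι, f, inferInstance, hι, hf⟩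
  · push Not at hindep
    obtain ⟨s, hs, hunc⟩ := hindep
    exact ⟨R, inferInstance, inferInstance, s, Finsupp.linearCombination R (Subtype.val : s → M),
      inferInstance, not_countable_iff.1 hunc, hs⟩

end DirectSum

section Characters

/-- The inclusion `ℚ/ℤ → ℝ/ℤ`, which turns `ℚ/ℤ`-valued characters into circle-valued ones. -/
noncomputable def ratAddCircleToReal : AddCircle (1 : ℚ) →+ AddCircle (1 : ℝ) :=
  QuotientAddGroup.map _ _ (Rat.castHom ℝ).toAddMonoidHom (by simp)

theorem ratAddCircleToReal_injective : Function.Injective ratAddCircleToReal := by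
  rw [injective_iff_map_eq_zero]
  intro x hx
  induction x using QuotientAddGroup.induction_on with
  | H q =>
    have hq : ((q : ℝ) : AddCircle (1 : ℝ)) = 0 := hx
    obtain ⟨n, hn⟩ := (AddCircle.coe_eq_zero_iff (1 : ℝ)).1 hq
    refine (AddCircle.coe_eq_zero_iff (1 : ℚ)).2 ⟨n, Rat.cast_injective (α := ℝ) ?_⟩
    simpa using hn

variable {A : Type*} [AddCommGroup A]

theorem exists_addCircle_character_apply_ne_zero {a : A} (ha : a ≠ 0) :
    ∃ χ : A →+ AddCircle (1 : ℝ), χ a ≠ 0 := by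
  obtain ⟨c, hc⟩ := CharacterModule.exists_character_apply_ne_zero_of_ne_zero ha
  exact ⟨ratAddCircleToReal.comp (show A →+ AddCircle (1 : ℚ) from c),
    (map_ne_zero_iff _ ratAddCircleToReal_injective).2 hc⟩

theorem exists_addCircle_character_comp_eq {B : Type*} [AddCommGroup B] {f : A →+ B}
    (hf : Function.Injective f) (φ : A →+ AddCircle (1 : ℝ)) :
    ∃ χ : B →+ AddCircle (1 : ℝ), χ.comp f = φ :=
  (Module.Baer.of_divisible _).extension_property_addMonoidHom f hf φ

end Characters

namespace bohrTopology

variable (G : Type*) [AddCommGroup G]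

theorem isInducing_pi :
    letI := bohrTopology G
    IsInducing (AddMonoidHom.pi fun χ : G →+ AddCircle (1 : ℝ) ↦ χ) :=
  inducing_iInf_to_pi _

theorem regularSpace : @RegularSpace G (bohrTopology G) :=
  regularSpace_iInf fun _ ↦ regularSpace_induced _

theorem countableChainCondition : @CountableChainCondition G (bohrTopology G) :=
  letI := bohrTopology G
  .of_isInducing_addMonoidHom (isInducing_pi G)

variable {G}

theorem continuous_character (χ : G →+ AddCircle (1 : ℝ)) : Continuous[bohrTopology G, _] χ :=
  continuous_iff_le_induced.2 (iInf_le _ χ)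

theorem isClosed_addSubgroup (H : AddSubgroup G) : IsClosed[bohrTopology G] (H : Set G) := by
  let := bohrTopology G
  refine isOpen_compl_iff.1 (isOpen_iff_mem_nhds.2 fun x hx ↦ ?_)
  obtain ⟨ψ, hψ⟩ := exists_addCircle_character_apply_ne_zero
    (mt (QuotientAddGroup.eq_zero_iff (N := H) x).1 hx)
  let χ : G →+ AddCircle (1 : ℝ) := ψ.comp (QuotientAddGroup.mk' H)
  filter_upwards [(continuous_character χ).continuousAt.eventually_ne hψ] with y hy hyH
  exact hy (by simp [χ, (QuotientAddGroup.eq_zero_iff y).2 hyH])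

theorem locallyFinite_singleton_finsupp {A ι : Type*} [AddCommGroup A] {a : A} (ha : a ≠ 0)
    {f : (ι →₀ A) →+ G} (hf : Function.Injective f) :
    letI := bohrTopology G
    LocallyFinite fun i ↦ ({f (Finsupp.single i a)} : Set G) := by
  classical
  let := bohrTopology G
  intro x
  by_cases hx : x ∈ f.range
  · obtain ⟨y, rfl⟩ := hx
    obtain ⟨ψ, hψ⟩ := exists_addCircle_character_apply_ne_zero ha
    obtain ⟨χ, hχ⟩ := exists_addCircle_character_comp_eq hf
      (Finsupp.liftAddHom fun i ↦ if i ∈ y.support then 0 else ψ)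
    have hχy : χ (f y) = 0 := by
      refine (DFunLike.congr_fun hχ y).trans (Finset.sum_eq_zero fun i hi ↦ ?_)
      simp [Finsupp.mem_support_iff.1 hi]
    have hχ_single {i : ι} (hi : i ∉ y.support) : χ (f (Finsupp.single i a)) = ψ a :=
      (DFunLike.congr_fun hχ _).trans (by simp [Finsupp.notMem_support_iff.1 hi])
    refine ⟨{g | χ g ≠ ψ a}, (continuous_character χ).continuousAt.eventually_ne
      (hχy.trans_ne hψ.symm), y.support.finite_toSet.subset ?_⟩
    rintro i ⟨_, rfl, hi⟩
    exact not_not.1 (mt hχ_single hi)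
  · refine ⟨_, (isClosed_addSubgroup f.range).isOpen_compl.mem_nhds hx, ?_⟩
    convert Set.finite_empty
    simp

theorem lindelofSpace_iff_countable : @LindelofSpace G (bohrTopology G) ↔ Countable G := by
  let := bohrTopology G
  refine ⟨fun _ ↦ ?_, fun _ ↦ inferInstance⟩
  by_contra hG
  rw [not_countable_iff] at hG
  obtain ⟨A, _, _, ι, f, _, hι, hf⟩ := exists_injective_finsupp_of_uncountable ℤ G
  obtain ⟨a, ha⟩ := exists_ne (0 : A)
  exact not_countable (countable_of_locallyFinite_of_nonempty
    (locallyFinite_singleton_finsupp (f := f.toAddMonoidHom) ha hf) fun _ ↦ singleton_nonempty _)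

theorem paracompactSpace_iff_lindelofSpace :
    letI := bohrTopology G
    ParacompactSpace G ↔ LindelofSpace G :=
  let := bohrTopology G
  have := regularSpace G
  ⟨fun _ ↦ (countableChainCondition G).lindelofSpace,
    fun _ ↦ paracompactSpace_of_lindelofSpace_of_regularSpace⟩

end bohrTopology

/-- For an abelian group `G`, the space `G^#` is paracompact iff `G` is countable. -/
theorem bohr_paracompact_iff_countable (G : Type*) [AddCommGroup G] :
    letI := bohrTopology G
    ParacompactSpace G ↔ Countable G :=
  bohrTopology.paracompactSpace_iff_lindelofSpace.trans bohrTopology.lindelofSpace_iff_countable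
end

section
/- For every infinite abelian group G, the space G^# is not pseudocompact: there exists a continuous real-valued function on G^# that is unbounded. -/
open scoped Pointwise

/-!
A countably infinite subgroup of `G` embeds into a countable divisible group `D`, and by
divisibility the embedding extends to a homomorphism `φ : G → D`. Since `D` is countable and
characters separate its points, `D` embeds into a countable power of the circle. The resulting map
from `G` to this compact metrizable group is Bohr continuous, and its image is a countably infinite
subgroup, which by the Baire category theorem cannot be compact. Hence the image misses a point `p`
of its closure, and the inverse of the distance to `p` is continuous and unbounded on `G^#`.
-/

open Function Set

section Topology

theorem exists_continuous_unbounded_of_not_isClosed_range {X Y : Type*} [TopologicalSpace X]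
    [TopologicalSpace Y] [TopologicalSpace.MetrizableSpace Y] {F : X → Y} (hF : Continuous F)
    (hrange : ¬ IsClosed (range F)) :
    ∃ f : X → ℝ, Continuous f ∧ ∀ C : ℝ, ∃ x : X, C < |f x| := by
  let := TopologicalSpace.metrizableSpaceMetric Y
  obtain ⟨p, hp_closure, hp_range⟩ : ∃ p ∈ closure (range F), p ∉ range F :=
    not_subset.1 fun h => hrange (isClosed_of_closure_subset h)
  have dist_pos_p (x : X) : 0 < dist p (F x) := dist_pos.2 fun h => hp_range ⟨x, h.symm⟩
  refine ⟨fun x => (dist p (F x))⁻¹,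
    (continuous_const.dist hF).inv₀ fun x => (dist_pos_p x).ne', fun C => ?_⟩
  have hC : 0 < |C| + 1 := by positivity
  obtain ⟨x, hx⟩ := Metric.mem_closure_range_iff.1 hp_closure (|C| + 1)⁻¹ (inv_pos.2 hC)
  refine ⟨x, ?_⟩
  calc
    C < |C| + 1 := (le_abs_self C).trans_lt (lt_add_one _)
    _ < (dist p (F x))⁻¹ := (lt_inv_comm₀ (dist_pos_p x) hC).1 hx
    _ ≤ |(dist p (F x))⁻¹| := le_abs_self _

theorem exists_isOpen_singleton_of_countable (X : Type*) [TopologicalSpace X] [T1Space X]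
    [BaireSpace X] [Countable X] [Nonempty X] : ∃ x : X, IsOpen {x} := by
  obtain ⟨x, hx⟩ := nonempty_interior_of_iUnion_of_closed
    (fun x : X => isClosed_singleton (x := x)) (iUnion_of_singleton X)
  exact ⟨x, interior_eq_iff_isOpen.1 (hx.subset_singleton_iff.1 interior_subset)⟩

theorem discreteTopology_of_countable_addGroup (A : Type*) [AddGroup A] [TopologicalSpace A]
    [ContinuousAdd A] [T1Space A] [BaireSpace A] [Countable A] : DiscreteTopology A := by
  obtain ⟨a, ha⟩ := exists_isOpen_singleton_of_countable A
  refine discreteTopology_of_isOpen_singleton_zero ?_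
  simpa using ha.preimage (continuous_const_add a)

theorem finite_addSubgroup_of_isCompact_of_countable {X : Type*} [AddGroup X] [TopologicalSpace X]
    [ContinuousAdd X] [T2Space X] (S : AddSubgroup X) (hcompact : IsCompact (S : Set X))
    (hcountable : (S : Set X).Countable) : (S : Set X).Finite := by
  have : CompactSpace S := isCompact_iff_compactSpace.1 hcompact
  have : Countable S := hcountable.to_subtype
  have : ContinuousAdd S := S.toAddSubmonoid.continuousAdd
  have : DiscreteTopology S := discreteTopology_of_countable_addGroup S
  have : Finite S := finite_of_compact_of_discrete
  exact toFinite _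

end Topology

section Divisible

universe u

theorem baer_int_quotient_of_module_rat {V : Type*} [AddCommGroup V] [Module ℚ V]
    (P : Submodule ℤ V) : Module.Baer ℤ (V ⧸ P) := by
  have smul_surjective {n : ℤ} (hn : n ≠ 0) : Surjective fun x : V ⧸ P => n • x := by
    intro x
    obtain ⟨v, rfl⟩ := P.mkQ_surjective x
    refine ⟨P.mkQ ((n : ℚ)⁻¹ • v), ?_⟩
    dsimp only
    rw [← map_smul, ← Int.cast_smul_eq_zsmul ℚ, smul_inv_smul₀ (Int.cast_ne_zero.2 hn)]
  let : DivisibleBy (V ⧸ P) ℤ := divisibleByOfSMulRightSurj _ _ smul_surjective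
  exact .of_divisible _

theorem mapQ_map_injective {R M N : Type*} [Ring R] [AddCommGroup M] [AddCommGroup N] [Module R M]
    [Module R N] (K : Submodule R M) {i : M →ₗ[R] N} (hi : Injective i) :
    Injective (K.mapQ (K.map i) i (Submodule.le_comap_map i K)) := by
  rw [← LinearMap.ker_eq_bot, Submodule.mapQ, Submodule.ker_liftQ, LinearMap.ker_comp,
    Submodule.ker_mkQ, Submodule.comap_map_eq_of_injective hi, Submodule.mkQ_map_self]

-- Writing `A` as `ℤ^(A) / K`, the divisible group is `ℚ^(A) / K`.
theorem exists_injective_hom_countable_baer (A : Type u) [AddCommGroup A] [Countable A] :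
    ∃ (D : Type u) (_ : AddCommGroup D) (_ : Countable D) (i : A →+ D),
      Module.Baer ℤ D ∧ Injective i := by
  let π : (A →₀ ℤ) →ₗ[ℤ] A := Finsupp.linearCombination ℤ id
  have hπ : Surjective π := Finsupp.linearCombination_id_surjective ℤ A
  let toRat : (A →₀ ℤ) →ₗ[ℤ] (A →₀ ℚ) :=
    Finsupp.mapRange.linearMap (Int.castAddHom ℚ).toIntLinearMap
  have toRat_injective : Injective toRat :=
    Finsupp.mapRange_injective _ (map_zero _) Int.cast_injective
  let P : Submodule ℤ (A →₀ ℚ) := (LinearMap.ker π).map toRat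
  let i : A →ₗ[ℤ] (A →₀ ℚ) ⧸ P :=
    (LinearMap.ker π).mapQ P toRat (Submodule.le_comap_map _ _) ∘ₗ
      (π.quotKerEquivOfSurjective hπ).symm
  exact ⟨(A →₀ ℚ) ⧸ P, inferInstance, P.mkQ_surjective.countable, i.toAddMonoidHom,
    baer_int_quotient_of_module_rat P,
    (mapQ_map_injective _ toRat_injective).comp (LinearEquiv.injective _)⟩

theorem exists_countable_infinite_addSubgroup (G : Type*) [AddCommGroup G] [Infinite G] :
    ∃ H : AddSubgroup G, Countable H ∧ Infinite H := by
  let x : ℕ ↪ G := Infinite.natEmbedding G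
  let combination : (ℕ →₀ ℤ) →+ G := (Finsupp.linearCombination ℤ x).toAddMonoidHom
  have range_x_subset : range x ⊆ combination.range := by
    rintro _ ⟨n, rfl⟩
    exact ⟨Finsupp.single n 1, by simp [combination]⟩
  exact ⟨combination.range, (countable_range combination).to_subtype,
    ((infinite_range_of_injective x.injective).mono range_x_subset).to_subtype⟩

theorem exists_hom_countable_infinite_range (G : Type u) [AddCommGroup G] [Infinite G] :
    ∃ (D : Type u) (_ : AddCommGroup D) (_ : Countable D) (φ : G →+ D), (range φ).Infinite := by
  obtain ⟨H, _, _⟩ := exists_countable_infinite_addSubgroup G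
  obtain ⟨D, _, _, i, hD, hi⟩ := exists_injective_hom_countable_baer H
  obtain ⟨φ, hφ⟩ := hD.extension_property_addMonoidHom H.subtype H.subtype_injective i
  refine ⟨D, inferInstance, inferInstance, φ, (infinite_range_of_injective hi).mono ?_⟩
  rw [← hφ, AddMonoidHom.coe_comp]
  exact range_comp_subset_range _ _

end Divisible

section Characters

theorem exists_injective_hom_addCircle_rat_real :
    ∃ j : AddCircle (1 : ℚ) →+ AddCircle (1 : ℝ), Injective j := by
  let ratCast : ℚ →+ ℝ := Rat.castHom ℝ
  have map_zmultiples : (AddSubgroup.zmultiples 1).map ratCast = .zmultiples 1 := by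
    simp [ratCast, AddMonoidHom.map_zmultiples]
  have comap_zmultiples : (AddSubgroup.zmultiples 1).comap ratCast = .zmultiples 1 := by
    rw [← map_zmultiples, AddSubgroup.comap_map_eq_self_of_injective Rat.cast_injective]
  refine ⟨QuotientAddGroup.map _ _ ratCast comap_zmultiples.ge, ?_⟩
  rw [← AddMonoidHom.ker_eq_bot_iff, QuotientAddGroup.ker_map, comap_zmultiples,
    QuotientAddGroup.map_mk'_self]

theorem exists_hom_addCircle_apply_ne_zero {A : Type*} [AddCommGroup A] {a : A} (ha : a ≠ 0) :
    ∃ χ : A →+ AddCircle (1 : ℝ), χ a ≠ 0 := by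
  obtain ⟨c, hc⟩ := CharacterModule.exists_character_apply_ne_zero_of_ne_zero ha
  obtain ⟨j, hj⟩ := exists_injective_hom_addCircle_rat_real
  exact ⟨j.comp c, (map_ne_zero_iff j hj).2 hc⟩

theorem exists_injective_hom_pi_addCircle (A : Type*) [AddCommGroup A] :
    ∃ e : A →+ ({a : A // a ≠ 0} → AddCircle (1 : ℝ)), Injective e := by
  choose χ hχ using fun a : {a : A // a ≠ 0} => exists_hom_addCircle_apply_ne_zero a.2
  refine ⟨AddMonoidHom.pi χ, (injective_iff_map_eq_zero _).2 fun a ha => ?_⟩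
  by_contra hne
  exact hχ ⟨a, hne⟩ (congrFun ha ⟨a, hne⟩)

theorem continuous_bohrTopology_hom_pi {G ι : Type*} [AddCommGroup G]
    (Φ : G →+ (ι → AddCircle (1 : ℝ))) : letI := bohrTopology G; Continuous Φ := by
  let := bohrTopology G
  exact continuous_pi fun k =>
    continuous_iInf_dom (i := (Pi.evalAddMonoidHom _ k).comp Φ) continuous_induced_dom

end Characters

/-- For every infinite abelian group `G`, the space `G^#` is not pseudocompact: there is
an unbounded continuous real-valued function on `G^#`. -/
theorem bohr_not_pseudocompact (G : Type*) [AddCommGroup G] [Infinite G] :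
    letI := bohrTopology G
    ∃ f : G → ℝ, Continuous f ∧ ∀ C : ℝ, ∃ x : G, C < |f x| := by
  let := bohrTopology G
  obtain ⟨D, _, _, φ, hφ⟩ := exists_hom_countable_infinite_range G
  obtain ⟨e, he⟩ := exists_injective_hom_pi_addCircle D
  let Φ := e.comp φ
  have range_Φ : range Φ = e '' range φ := range_comp e φ
  have range_countable : (range Φ).Countable := range_Φ ▸ (to_countable _).image e
  have range_infinite : (range Φ).Infinite := range_Φ ▸ hφ.image he.injOn
  have : Fact ((0 : ℝ) < 1) := ⟨one_pos⟩
  have range_not_isClosed : ¬ IsClosed (range Φ) := fun hclosed =>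
    range_infinite
      (finite_addSubgroup_of_isCompact_of_countable Φ.range hclosed.isCompact range_countable)
  exact exists_continuous_unbounded_of_not_isClosed_range
    (continuous_bohrTopology_hom_pi Φ) range_not_isClosed
end

section
/- For every abelian group G, every subset A of G^# contains a subset D with |D| = |A| such that D is relatively discrete and D is closed in G^#. -/
open scoped Pointwise

/-!
It suffices to find `D ⊆ A` with `|D| = |A|` such that every point of `G` has a neighbourhood, cut
out by a single character, that contains only finitely many elements of `D`.

Well-order `G` and let `D` consist of those `a ∈ A` that are not in the subgroup generated by the
elements of `A` below `a`. Then `D` generates the same subgroup as `A`, so `|D| = |A|` as soon as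
`D` is infinite. Fix `x`. As `ℤ` is Noetherian, all but finitely many `d ∈ D` stay outside the
subgroup generated by `x` and the elements of `D` below `d`; for those, a character vanishing at
`x` can be adjusted one element at a time so that its values stay away from `0`, and compactness
of the space of characters handles all of them at once.

If `D` is finite and `A` infinite, then `A` lies in a finitely generated subgroup, and some
homomorphism `F : G → ℝ` is unbounded on `A`. A sequence in `A` along which `|F|` grows fast enough
works: for every `x` the numbers `F (a n) - F x` are eventually lacunary, so some multiple `θ • F`
maps almost all of them away from the integers.
-/

open Set Filter Topology Cardinal

namespace Bohr

section Circle

lemma norm_coe_abs (p t : ℝ) : ‖((|t| : ℝ) : AddCircle p)‖ = ‖(t : AddCircle p)‖ := by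
  rcases abs_choice t with h | h <;> simp only [h, AddCircle.coe_neg, norm_neg]

lemma quarter_le_norm_coe {t : ℝ} {m : ℤ} (ht : t ∈ Icc (m + 1 / 4 : ℝ) (m + 3 / 4)) :
    1 / 4 ≤ ‖(t : AddCircle (1 : ℝ))‖ := by
  rw [UnitAddCircle.norm_eq]
  rcases le_or_gt (round t) m with hm | hm
  · have : (round t : ℝ) ≤ m := mod_cast hm
    exact le_abs.2 (.inl (by linarith [ht.1]))
  · have : (m : ℝ) + 1 ≤ round t := mod_cast hm
    exact le_abs.2 (.inr (by linarith [ht.2]))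

lemma exists_coe_eq_and_abs_eq_norm (v : AddCircle (1 : ℝ)) :
    ∃ t : ℝ, (t : AddCircle (1 : ℝ)) = v ∧ |t| = ‖v‖ := by
  induction v using QuotientAddGroup.induction_on with
  | H z =>
    refine ⟨z - round z, ?_, UnitAddCircle.norm_eq.symm⟩
    rw [AddCircle.coe_sub, sub_eq_self, AddCircle.coe_eq_zero_iff]
    exact ⟨round z, by simp⟩

lemma exists_quarter_le_norm_nsmul {v : AddCircle (1 : ℝ)} (hv : v ≠ 0) :
    ∃ k : ℕ, 1 / 4 ≤ ‖k • v‖ := by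
  obtain ⟨t, rfl, ht⟩ := exists_coe_eq_and_abs_eq_norm v
  have t_pos : 0 < |t| := ht ▸ norm_pos_iff.2 hv
  have t_le : |t| ≤ 1 / 2 := by
    simpa [ht] using AddCircle.norm_le_half_period 1 one_ne_zero (x := (t : AddCircle (1 : ℝ)))
  -- The first multiple of `|t|` to reach `1 / 4` overshoots it by at most `|t| ≤ 1 / 2`.
  let k := ⌈1 / 4 / |t|⌉₊
  have quarter_le : 1 / 4 ≤ k * |t| := (div_le_iff₀ t_pos).1 (Nat.le_ceil _)
  have le_three_quarters : k * |t| ≤ 3 / 4 := by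
    have : (k : ℝ) < 1 / 4 / |t| + 1 := Nat.ceil_lt_add_one (by positivity)
    calc k * |t| ≤ (1 / 4 / |t| + 1) * |t| := by gcongr
      _ = 1 / 4 + |t| := by field_simp
      _ ≤ 3 / 4 := by linarith
  refine ⟨k, ?_⟩
  rw [← AddCircle.coe_nsmul, ← norm_coe_abs, nsmul_eq_mul, abs_mul, Nat.abs_cast]
  exact quarter_le_norm_coe (m := 0) ⟨by simpa using quarter_le, by simpa using le_three_quarters⟩

lemma exists_Icc_div_subset {c d : ℝ} (hc : 0 < c) (hcd : 4 * c ≤ d) (m : ℤ) :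
    ∃ m' : ℤ, Icc ((m' + 1 / 4) / d) ((m' + 3 / 4) / d) ⊆
      Icc ((m + 1 / 4) / c) ((m + 3 / 4) / c) := by
  have hd : 0 < d := by linarith
  have ratio : 4 ≤ d / c := (le_div_iff₀ hc).2 hcd
  refine ⟨⌈(m + 1 / 4) / c * d⌉, Icc_subset_Icc ?_ ?_⟩
  · rw [le_div_iff₀ hd]
    linarith [Int.le_ceil ((m + 1 / 4) / c * d)]
  · rw [div_le_iff₀ hd]
    calc (⌈(m + 1 / 4) / c * d⌉ : ℝ) + 3 / 4
        ≤ (m + 1 / 4) / c * d + 2 := by linarith [Int.ceil_lt_add_one ((m + 1 / 4) / c * d)]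
      _ ≤ (m + 1 / 4) / c * d + 1 / 2 * (d / c) := by linarith
      _ = (m + 3 / 4) / c * d := by ring

lemma exists_quarter_le_norm_coe_mul_of_pos {c : ℕ → ℝ} (c_zero_pos : 0 < c 0)
    (hc : ∀ n, 4 * c n ≤ c (n + 1)) :
    ∃ θ : ℝ, ∀ n, 1 / 4 ≤ ‖((c n * θ : ℝ) : AddCircle (1 : ℝ))‖ := by
  have c_pos (n : ℕ) : 0 < c n := by
    induction n with
    | zero => exact c_zero_pos
    | succ n ih => linarith [hc n]
  choose next hnext using fun n ↦ exists_Icc_div_subset (c_pos n) (hc n)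
  let m (n : ℕ) : ℤ := Nat.rec (motive := fun _ ↦ ℤ) 0 next n
  have nested : Antitone fun n ↦ Icc ((m n + 1 / 4) / c n) ((m n + 3 / 4) / c n) :=
    antitone_nat_of_succ_le fun n ↦ hnext n (m n)
  have nonempty (n : ℕ) : (m n + 1 / 4) / c n ≤ (m n + 3 / 4) / c n := by
    have := c_pos n
    gcongr
    norm_num
  obtain ⟨θ, hθ⟩ : (⋂ n, Icc ((m n + 1 / 4) / c n) ((m n + 3 / 4) / c n)).Nonempty :=
    ⟨_, ciSup_mem_iInter_Icc_of_antitone_Icc nested nonempty⟩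
  refine ⟨θ, fun n ↦ quarter_le_norm_coe (m := m n) ?_⟩
  obtain ⟨le_θ, θ_le⟩ := mem_iInter.1 hθ n
  exact ⟨(div_le_iff₀' (c_pos n)).1 le_θ, (le_div_iff₀' (c_pos n)).1 θ_le⟩

lemma exists_eventually_quarter_le_norm_coe_mul {c : ℕ → ℝ} (c_ne : ∀ᶠ n in atTop, c n ≠ 0)
    (hc : ∀ᶠ n in atTop, 4 * |c n| ≤ |c (n + 1)|) :
    ∃ θ : ℝ, ∀ᶠ n in atTop, 1 / 4 ≤ ‖((c n * θ : ℝ) : AddCircle (1 : ℝ))‖ := by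
  obtain ⟨N, hN⟩ := eventually_atTop.1 (c_ne.and hc)
  obtain ⟨θ, hθ⟩ := exists_quarter_le_norm_coe_mul_of_pos (c := fun n ↦ |c (N + n)|)
    (abs_pos.2 (hN N le_rfl).1) (fun n ↦ (hN _ (N.le_add_right n)).2)
  refine ⟨θ, eventually_atTop.2 ⟨N, fun n hn ↦ ?_⟩⟩
  obtain ⟨k, rfl⟩ := Nat.exists_eq_add_of_le hn
  rw [← norm_coe_abs, abs_mul]
  simpa only [← norm_coe_abs _ (_ * _), abs_mul, abs_abs] using hθ k

end Circle

section Growth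

lemma exists_seq_mul_abs_add_one_le {α : Type*} {A : Set α} {F : α → ℝ}
    (hF : ¬ Bornology.IsBounded (F '' A)) (K : ℝ) :
    ∃ a : ℕ → α, (∀ n, a n ∈ A) ∧ ∀ n, K * (|F (a n)| + 1) ≤ |F (a (n + 1))| := by
  have exists_large (C : ℝ) : ∃ a ∈ A, C ≤ |F a| := by
    by_contra! hC
    exact hF (isBounded_iff_forall_norm_le.2 ⟨C, forall_mem_image.2 fun a ha ↦ (hC a ha).le⟩)
  choose large large_mem le_large using exists_large
  refine ⟨fun n ↦ Nat.rec (large 0) (fun _ b ↦ large (K * (|F b| + 1))) n, fun n ↦ ?_,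
    fun n ↦ le_large _⟩
  cases n <;> exact large_mem _

variable {u : ℕ → ℝ}

lemma tendsto_abs_atTop_of_mul_abs_add_one_le {K : ℝ} (hK : 1 < K)
    (hu : ∀ n, K * (|u n| + 1) ≤ |u (n + 1)|) : Tendsto (fun n ↦ |u n|) atTop atTop := by
  have : Tendsto (fun n ↦ |u n| + 1) atTop atTop :=
    tendsto_atTop_of_geom_le (by positivity) hK fun n ↦ (hu n).trans (by simp)
  simpa using tendsto_atTop_add_const_right atTop (-1) this

lemma exists_eventually_quarter_le_norm_coe_sub_mul (hu : ∀ n, 5 * (|u n| + 1) ≤ |u (n + 1)|)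
    (y : ℝ) : ∃ θ : ℝ, ∀ᶠ n in atTop, 1 / 4 ≤ ‖(((u n - y) * θ : ℝ) : AddCircle (1 : ℝ))‖ := by
  have abs_tendsto := tendsto_abs_atTop_of_mul_abs_add_one_le (by norm_num) hu
  apply exists_eventually_quarter_le_norm_coe_mul
  · filter_upwards [abs_tendsto.eventually_gt_atTop |y|] with n hn h
    exact hn.ne' (by rw [sub_eq_zero.1 h])
  · filter_upwards [abs_tendsto.eventually_ge_atTop (5 * |y|)] with n hn
    linarith [hu n, abs_sub (u n) y, abs_sub_abs_le_abs_sub (u (n + 1)) y]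

end Growth

section Character

variable {G : Type*} [AddCommGroup G]

lemma exists_injective_ratCircle_hom_realCircle :
    ∃ ι : AddCircle (1 : ℚ) →+ AddCircle (1 : ℝ), Function.Injective ι := by
  let coe : ℚ →+ AddCircle (1 : ℝ) := (QuotientAddGroup.mk' _).comp (Rat.castHom ℝ).toAddMonoidHom
  have ker_coe : AddSubgroup.zmultiples (1 : ℚ) = coe.ker := by
    ext q
    have : coe q = 0 ↔ ∃ n : ℤ, n • (1 : ℝ) = q := AddCircle.coe_eq_zero_iff 1
    rw [AddMonoidHom.mem_ker, this, AddSubgroup.mem_zmultiples_iff]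
    simp only [zsmul_one]
    exact exists_congr fun n ↦ by norm_cast
  exact ⟨QuotientAddGroup.lift _ coe ker_coe.le,
    (QuotientAddGroup.injective_lift_iff _ coe ker_coe.le).2 ker_coe⟩

lemma exists_character_ne_zero {a : G} (ha : a ≠ 0) : ∃ χ : G →+ AddCircle (1 : ℝ), χ a ≠ 0 := by
  obtain ⟨c, hc⟩ := CharacterModule.exists_character_apply_ne_zero_of_ne_zero ha
  obtain ⟨ι, hι⟩ := exists_injective_ratCircle_hom_realCircle
  exact ⟨ι.comp c, (map_ne_zero_iff ι hι).2 hc⟩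

lemma exists_character_quarter_le_norm {H : AddSubgroup G} {a : G} (ha : a ∉ H) :
    ∃ χ : G →+ AddCircle (1 : ℝ), (∀ h ∈ H, χ h = 0) ∧ 1 / 4 ≤ ‖χ a‖ := by
  obtain ⟨χ, hχ⟩ := exists_character_ne_zero (mt (QuotientAddGroup.eq_zero_iff a).1 ha)
  obtain ⟨k, hk⟩ := exists_quarter_le_norm_nsmul hχ
  refine ⟨k • χ.comp (QuotientAddGroup.mk' H), fun h hh ↦ ?_, hk⟩
  simp [(QuotientAddGroup.eq_zero_iff h).2 hh]

lemma exists_character_eighth_le_norm_add {H : AddSubgroup G} {a : G} (ha : a ∉ H)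
    (t : AddCircle (1 : ℝ)) :
    ∃ χ : G →+ AddCircle (1 : ℝ), (∀ h ∈ H, χ h = 0) ∧ 1 / 8 ≤ ‖t + χ a‖ := by
  rcases le_or_gt (1 / 8) ‖t‖ with ht | ht
  · exact ⟨0, by simp, by simpa using ht⟩
  · obtain ⟨χ, χ_eq_zero, hχ⟩ := exists_character_quarter_le_norm ha
    have : ‖χ a‖ ≤ ‖t + χ a‖ + ‖t‖ := by simpa using norm_sub_le (t + χ a) t
    exact ⟨χ, χ_eq_zero, by linarith⟩

end Character

section LocallyFinite

variable {G : Type*} [AddCommGroup G] {D : Set G}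

/-- Every point `x` of `G` has a neighbourhood of the form `{y | ‖χ y - χ x‖ < ε}`, for a single
character `χ`, that meets `D` in a finite set. In the Bohr topology this makes `D` closed and
discrete. -/
def IsCharacterLocallyFinite (D : Set G) : Prop :=
  ∀ x : G, ∃ χ : G →+ AddCircle (1 : ℝ), ∃ ε > 0, {d ∈ D | ‖χ d - χ x‖ < ε}.Finite

lemma continuous_character (χ : G →+ AddCircle (1 : ℝ)) : Continuous[bohrTopology G, _] χ :=
  continuous_iInf_dom continuous_induced_dom

lemma t1Space_bohrTopology : @T1Space G (bohrTopology G) := by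
  let := bohrTopology G
  refine t1Space_iff_exists_open.2 fun x y hxy ↦ ?_
  obtain ⟨χ, hχ⟩ := exists_character_ne_zero (sub_ne_zero.2 hxy)
  refine ⟨χ ⁻¹' {χ y}ᶜ, isOpen_compl_singleton.preimage (continuous_character χ), ?_, by simp⟩
  simpa [sub_eq_zero] using hχ

lemma isClosed_and_isDiscrete_of_locally_finite {X : Type*} [TopologicalSpace X] [T1Space X]
    {S : Set X} (hS : ∀ x, ∃ U ∈ 𝓝 x, (U ∩ S).Finite) : IsClosed S ∧ IsDiscrete S := by
  rw [← compl_mem_codiscrete_iff, codiscrete, codiscreteWithin_iff_locallyFiniteComplementWithin]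
  simpa using hS

lemma IsCharacterLocallyFinite.isClosed_and_isDiscrete (hD : IsCharacterLocallyFinite D) :
    letI := bohrTopology G
    IsClosed D ∧ IsDiscrete D := by
  let := bohrTopology G
  have := t1Space_bohrTopology (G := G)
  refine isClosed_and_isDiscrete_of_locally_finite fun x ↦ ?_
  obtain ⟨χ, ε, ε_pos, finite⟩ := hD x
  refine ⟨χ ⁻¹' Metric.ball (χ x) ε,
    (continuous_character χ).continuousAt (Metric.ball_mem_nhds _ ε_pos), finite.subset ?_⟩
  exact fun d hd ↦ ⟨hd.2, mem_ball_iff_norm.1 hd.1⟩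

end LocallyFinite

section SuccessivelyIndependent

variable {G : Type*} [AddCommGroup G] [LinearOrder G] {H : AddSubgroup G} {D : Set G}

/-- No element of `D` lies in the subgroup generated by `H` and the smaller elements of `D`. The
order on `G` is arbitrary, unrelated to the group structure. -/
def IsSuccessivelyIndep (H : AddSubgroup G) (D : Set G) : Prop :=
  ∀ d ∈ D, d ∉ H ⊔ AddSubgroup.closure (D ∩ Iio d)

lemma IsSuccessivelyIndep.mono {D' : Set G} (hD : IsSuccessivelyIndep H D) (h : D' ⊆ D) :
    IsSuccessivelyIndep H D' := fun d hd hmem ↦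
  hD d (h hd) (sup_le_sup_left (AddSubgroup.closure_mono (inter_subset_inter_left _ h)) H hmem)

lemma exists_isSuccessivelyIndep_subset [WellFoundedLT G] (A : Set G) :
    ∃ D ⊆ A, IsSuccessivelyIndep ⊥ D ∧ A ⊆ AddSubgroup.closure D := by
  refine ⟨{a ∈ A | a ∉ AddSubgroup.closure (A ∩ Iio a)}, sep_subset _ _, fun d hd hmem ↦ ?_,
    fun a ↦ ?_⟩
  · rw [bot_sup_eq] at hmem
    exact hd.2 (AddSubgroup.closure_mono (inter_subset_inter_left _ (sep_subset _ _)) hmem)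
  · induction a using WellFoundedLT.induction with
    | ind a ih =>
      intro ha
      by_cases ha' : a ∈ AddSubgroup.closure (A ∩ Iio a)
      · exact (AddSubgroup.closure_le _).2 (fun b hb ↦ ih b hb.2 hb.1) ha'
      · exact AddSubgroup.subset_closure ⟨ha, ha'⟩

lemma exists_character_eighth_le_norm_of_finset {F : Finset G}
    (hF : IsSuccessivelyIndep H (F : Set G)) :
    ∃ χ : G →+ AddCircle (1 : ℝ), (∀ h ∈ H, χ h = 0) ∧ ∀ d ∈ F, 1 / 8 ≤ ‖χ d‖ := by
  induction F using Finset.induction_on_max with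
  | empty => exact ⟨0, by simp⟩
  | insert a s lt_a ih =>
    obtain ⟨χ, χ_eq_zero, hχ⟩ := ih (hF.mono (by simp))
    obtain ⟨ψ, ψ_eq_zero, hψ⟩ := exists_character_eighth_le_norm_add (hF a (by simp)) (χ a)
    have ψ_eq_zero_on_s (d : G) (hd : d ∈ s) : ψ d = 0 :=
      ψ_eq_zero d (AddSubgroup.mem_sup_right (AddSubgroup.subset_closure (by simp [hd, lt_a d hd])))
    refine ⟨χ + ψ, fun h hh ↦ ?_, Finset.forall_mem_insert _ _ _ |>.2 ⟨hψ, fun d hd ↦ ?_⟩⟩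
    · simp [χ_eq_zero h hh, ψ_eq_zero h (AddSubgroup.mem_sup_left hh)]
    · simpa [ψ_eq_zero_on_s d hd] using hχ d hd

lemma IsSuccessivelyIndep.exists_character_eighth_le_norm (hD : IsSuccessivelyIndep H D) :
    ∃ χ : G →+ AddCircle (1 : ℝ), (∀ h ∈ H, χ h = 0) ∧ ∀ d ∈ D, 1 / 8 ≤ ‖χ d‖ := by
  classical
  let characters : Set (G → AddCircle (1 : ℝ)) :=
    range ((↑) : (G →+ AddCircle (1 : ℝ)) → G → AddCircle (1 : ℝ)) ∩ {f | ∀ h ∈ H, f h = 0}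
  have compact : IsCompact characters := by
    refine ((AddMonoidHom.isClosed_range_coe _ _).inter ?_).isCompact
    simp only [ofPred_forall]
    exact isClosed_biInter fun h _ ↦ isClosed_eq (continuous_apply h) continuous_const
  obtain ⟨_, ⟨⟨χ, rfl⟩, χ_eq_zero⟩, hχ⟩ := compact.inter_iInter_nonempty
    (fun d : D ↦ {f | 1 / 8 ≤ ‖f d‖})
    (fun d ↦ isClosed_le continuous_const (continuous_apply _).norm) fun s ↦ by
      obtain ⟨χ, χ_eq_zero, hχ⟩ := exists_character_eighth_le_norm_of_finset
        (F := s.image (↑)) (hD.mono (by simp))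
      exact ⟨χ, ⟨⟨χ, rfl⟩, χ_eq_zero⟩,
        mem_iInter₂.2 fun d hd ↦ hχ d (Finset.mem_image_of_mem _ hd)⟩
  exact ⟨χ, χ_eq_zero, fun d hd ↦ mem_iInter.1 hχ ⟨d, hd⟩⟩

-- Writing an exceptional `d` as `h + c` puts `h` into the subgroup generated by the elements of `D`
-- up to `d` but not into that generated by the elements below `d`, so the traces of these
-- subgroups on `H` increase strictly along the exceptional elements.
lemma IsSuccessivelyIndep.finite_mem_sup_closure [WellFoundedLT G] (hD : IsSuccessivelyIndep ⊥ D)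
    (hH : H.FG) : {d ∈ D | d ∈ H ⊔ AddSubgroup.closure (D ∩ Iio d)}.Finite := by
  let trace (d : {d ∈ D | d ∈ H ⊔ AddSubgroup.closure (D ∩ Iio d)}) : Submodule ℤ H :=
    AddSubgroup.toIntSubmodule ((AddSubgroup.closure (D ∩ Iio d.1)).addSubgroupOf H)
  have strictMono : StrictMono trace := by
    rintro ⟨d, hdD, hd⟩ ⟨d', _⟩ (hlt : d < d')
    have closure_le : AddSubgroup.closure (D ∩ Iio d) ≤ AddSubgroup.closure (D ∩ Iio d') :=
      AddSubgroup.closure_mono (inter_subset_inter_right _ (Iio_subset_Iio hlt.le))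
    obtain ⟨h, hh, c, hc, rfl⟩ := AddSubgroup.mem_sup.1 hd
    refine SetLike.lt_iff_le_and_exists.2 ⟨fun _ hk ↦ closure_le hk, ⟨h, hh⟩, ?_, fun hmem ↦ ?_⟩
    · change h ∈ AddSubgroup.closure (D ∩ Iio d')
      have hd' : h + c ∈ AddSubgroup.closure (D ∩ Iio d') := AddSubgroup.subset_closure ⟨hdD, hlt⟩
      exact (add_mem_cancel_right (closure_le hc)).1 hd'
    · exact hD _ hdD (AddSubgroup.mem_sup_right (add_mem hmem hc))
  have : Module.Finite ℤ H :=
    Module.Finite.iff_addGroup_fg.2 ((AddGroup.fg_iff_addSubgroup_fg H).2 hH)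
  have := strictMono.wellFoundedGT
  exact Finite.of_wellFoundedLT_wellFoundedGT _

lemma IsSuccessivelyIndep.isCharacterLocallyFinite [WellFoundedLT G]
    (hD : IsSuccessivelyIndep ⊥ D) : IsCharacterLocallyFinite D := by
  intro x
  let H := AddSubgroup.zmultiples x
  have H_fg : H.FG := ⟨{x}, by simp [H, AddSubgroup.zmultiples_eq_closure]⟩
  let exceptional := {d ∈ D | d ∈ H ⊔ AddSubgroup.closure (D ∩ Iio d)}
  have indep : IsSuccessivelyIndep H (D \ exceptional) := fun d hd hmem ↦ hd.2 ⟨hd.1,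
    sup_le_sup_left (AddSubgroup.closure_mono (inter_subset_inter_left _ sdiff_subset)) H hmem⟩
  obtain ⟨χ, χ_eq_zero, hχ⟩ := indep.exists_character_eighth_le_norm
  refine ⟨χ, 1 / 8, by norm_num, (hD.finite_mem_sup_closure H_fg).subset fun d ⟨hd, hlt⟩ ↦ ?_⟩
  rw [χ_eq_zero x (AddSubgroup.mem_zmultiples x), sub_zero] at hlt
  by_contra hexc
  exact hlt.not_ge (hχ d ⟨hd, hexc⟩)

end SuccessivelyIndependent

section FinitelyGenerated

lemma exists_hom_int_infinite_image {H : Type*} [AddCommGroup H] [AddGroup.FG H] {B : Set H}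
    (hB : B.Infinite) : ∃ f : H →+ ℤ, (f '' B).Infinite := by
  classical
  obtain ⟨n, ι, _, p, hp, e, ⟨φ⟩⟩ := AddCommGroup.equiv_free_prod_directSum_zmod H
  have (i : ι) : NeZero (p i ^ e i) := ⟨pow_ne_zero _ (hp i).ne_zero⟩
  have torsion_finite : Finite (DirectSum ι fun i ↦ ZMod (p i ^ e i)) :=
    .of_equiv _ (DirectSum.addEquivProd fun i ↦ ZMod (p i ^ e i)).symm.toEquiv
  let coord (i : Fin n) : H →+ ℤ :=
    (Finsupp.applyAddHom i).comp ((AddMonoidHom.fst _ _).comp φ.toAddMonoidHom)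
  by_contra! hfin
  have free_part_finite : ((fun h i ↦ coord i h) '' B).Finite :=
    forall_finite_image_eval_iff.1 fun i ↦ by simpa only [image_image] using hfin (coord i)
  have torsion_part_finite : ((fun h ↦ (φ h).2) '' B).Finite := toFinite _
  have injective : Function.Injective fun h ↦ (fun i ↦ coord i h, (φ h).2) := fun a b hab ↦
    φ.injective (Prod.ext (Finsupp.ext (congrFun (Prod.mk.inj hab).1)) (Prod.mk.inj hab).2)
  exact hB (((free_part_finite.prod torsion_part_finite).preimage injective.injOn).subset
    fun b hb ↦ ⟨mem_image_of_mem _ hb, mem_image_of_mem _ hb⟩)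

variable {G : Type*} [AddCommGroup G] {A S : Set G}

lemma exists_hom_real_not_isBounded_image (hA : A.Infinite) (hS : S.Finite)
    (hAS : A ⊆ AddSubgroup.closure S) : ∃ F : G →+ ℝ, ¬ Bornology.IsBounded (F '' A) := by
  have := hS.to_subtype
  have : AddGroup.FG (AddSubgroup.closure S) := AddGroup.closure_finite_fg S
  have image_preimage : Subtype.val '' (Subtype.val ⁻¹' A : Set (AddSubgroup.closure S)) = A :=
    Subtype.image_preimage_coe _ _ |>.trans (inter_eq_right.2 hAS)
  obtain ⟨f, hf⟩ := exists_hom_int_infinite_image (Infinite.of_image _ (image_preimage.symm ▸ hA))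
  obtain ⟨F, hF⟩ := (Module.Baer.of_divisible ℝ).extension_property_addMonoidHom
    (AddSubgroup.closure S).subtype (AddSubgroup.subtype_injective _) ((Int.castAddHom ℝ).comp f)
  refine ⟨F, fun bounded ↦ hf ?_⟩
  have preimage_finite : ((↑) ⁻¹' (F '' A) : Set ℤ).Finite := by
    have := Metric.cobounded_eq_cocompact (α := ℝ) ▸ Int.tendsto_coe_cofinite
    simpa only [mem_map, preimage_compl, mem_cofinite, compl_compl] using
      this (Bornology.isBounded_def.1 bounded)
  refine preimage_finite.subset ?_
  rintro _ ⟨b, hb, rfl⟩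
  exact ⟨b, hb, DFunLike.congr_fun hF b⟩

lemma exists_isCharacterLocallyFinite_infinite_subset {F : G →+ ℝ}
    (hF : ¬ Bornology.IsBounded (F '' A)) :
    ∃ D ⊆ A, D.Infinite ∧ IsCharacterLocallyFinite D := by
  obtain ⟨a, a_mem, growth⟩ := exists_seq_mul_abs_add_one_le hF 5
  refine ⟨range a, range_subset_iff.2 a_mem, ?_, fun x ↦ ?_⟩
  · have strictMono : StrictMono fun n ↦ |F (a n)| :=
      strictMono_nat_of_lt_succ fun n ↦ by linarith [growth n, abs_nonneg (F (a n))]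
    exact infinite_range_of_injective (.of_comp (f := fun b ↦ |F b|) strictMono.injective)
  · obtain ⟨θ, hθ⟩ := exists_eventually_quarter_le_norm_coe_sub_mul growth (F x)
    let χ : G →+ AddCircle (1 : ℝ) :=
      (QuotientAddGroup.mk' _).comp ((AddMonoidHom.mulRight θ).comp F)
    have χ_sub (n : ℕ) : χ (a n) - χ x = ((F (a n) - F x) * θ : ℝ) := by
      rw [← map_sub, ← map_sub]; rfl
    rw [← Nat.cofinite_eq_atTop, eventually_cofinite] at hθ
    refine ⟨χ, 1 / 4, by norm_num, (hθ.image a).subset ?_⟩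
    rintro _ ⟨⟨n, rfl⟩, hlt⟩
    exact ⟨n, by simpa only [χ_sub, mem_ofPred_eq, not_le] using hlt, rfl⟩

end FinitelyGenerated

section Cardinality

variable {G : Type*} [AddCommGroup G] {A S : Set G}

lemma mk_closure_le_max (S : Set G) : #(AddSubgroup.closure S) ≤ max #S ℵ₀ := by
  have surjective : range (Finsupp.linearCombination ℤ ((↑) : S → G)) = AddSubgroup.closure S := by
    rw [← LinearMap.coe_range, Finsupp.range_linearCombination, Subtype.range_coe,
      ← Submodule.span_int_eq_addSubgroupClosure]
    rfl
  calc #(AddSubgroup.closure S) = #(range (Finsupp.linearCombination ℤ ((↑) : S → G))) := by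
        rw [surjective]; rfl
    _ ≤ #(S →₀ ℤ) := mk_range_le
    _ ≤ max #S ℵ₀ := by
      rcases finite_or_infinite S with _ | _
      · exact le_max_of_le_right mk_le_aleph0
      · simp [mk_finsupp_lift_of_infinite]

lemma mk_eq_of_subset_closure {D : Set G} (hDA : D ⊆ A) (hD : D.Infinite) (hSD : #S ≤ max #D ℵ₀)
    (hAS : A ⊆ AddSubgroup.closure S) : #D = #A := by
  have := hD.to_subtype
  refine (mk_le_mk_of_subset hDA).antisymm ?_
  calc #A ≤ #(AddSubgroup.closure S) := mk_le_mk_of_subset hAS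
    _ ≤ max #S ℵ₀ := mk_closure_le_max S
    _ ≤ #D := by simpa using hSD

end Cardinality

end Bohr

open Bohr

/-- Every subset `A` of `G^#` contains a relatively discrete subset `D` with
`|D| = |A|` which is closed in `G^#`. -/
theorem bohr_exists_discrete_closed_subset (G : Type*) [AddCommGroup G] (A : Set G) :
    letI := bohrTopology G
    ∃ D : Set G, D ⊆ A ∧ Cardinal.mk D = Cardinal.mk A ∧ DiscreteTopology D ∧ IsClosed D := by
  suffices ∃ D ⊆ A, #D = #A ∧ IsCharacterLocallyFinite D by
    obtain ⟨D, hDA, hcard, hD⟩ := this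
    let := bohrTopology G
    obtain ⟨closed, discrete⟩ := hD.isClosed_and_isDiscrete
    exact ⟨D, hDA, hcard, discrete.to_subtype, closed⟩
  rcases A.finite_or_infinite with hA | hA
  · exact ⟨A, subset_rfl, rfl, fun x ↦ ⟨0, 1, one_pos, hA.subset (sep_subset _ _)⟩⟩
  obtain ⟨_, _⟩ := exists_wellFoundedLT G
  obtain ⟨S, hSA, indep, hAS⟩ := exists_isSuccessivelyIndep_subset A
  rcases S.finite_or_infinite with hS | hS
  · obtain ⟨F, hF⟩ := exists_hom_real_not_isBounded_image hA hS hAS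
    obtain ⟨D, hDA, D_infinite, hD⟩ := exists_isCharacterLocallyFinite_infinite_subset hF
    exact ⟨D, hDA, mk_eq_of_subset_closure hDA D_infinite (by simp [hS.lt_aleph0.le]) hAS, hD⟩
  · exact ⟨S, hSA, mk_eq_of_subset_closure hSA hS (le_max_left _ _) hAS,
      indep.isCharacterLocallyFinite⟩
end

section
/- Every infinite abelian group G contains a subset A with |A| = |G| such that A is relatively discrete in G^# and 0 is the only limit point in G^# of the difference set A − A = {a − b : a, b ∈ A}. -/
open scoped Pointwise

/-!
Call `A ⊆ G` null-separating if every nonzero `x : G` is detected by a character tending to `0`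
along `A`, while some single character stays away from `0` on `A`. Such a set has no limit point
in `G^#`, so it is closed and discrete. Suppose differences `a - b ≠ x` of elements of `A` converge
to `x ≠ 0` along an ultrafilter. Neither coordinate is eventually constant, since otherwise `a - x`
or `x + b` would be a limit point of `A`. So both coordinates escape every finite set, and a
character that is null along `A` and detects `x` gives a contradiction. That `0` is a limit point
of `A - A` holds for every infinite `A`, because the characters take values in a compact group.

If `G` is uncountable, let `A` generate a maximal direct sum of nonzero cyclic subgroups. It is
null-separating because characters of the direct sum extend to `G`, and `|A| = |G|` because `G`
embeds into a quotient of `ℚ^(A)`. If `G` is countable, sequential compactness of `(ℝ/ℤ)^G` gives a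
sequence of nonzero elements that is null for countably many separating characters; dominated
convergence against Haar measure on the dual group shows that some other character is not null
along it, and `A` is a subsequence.
-/

section

open Cardinal Filter Submodule Topology

section Essential

/-- An essential element of an order with `⊥`: only `⊥` is disjoint from it. In the lattice of
submodules these are the essential submodules; the notion expresses maximality of a direct sum. -/
def IsEssential {α : Type*} [PartialOrder α] [OrderBot α] (a : α) : Prop :=
  ∀ b, Disjoint a b → b = ⊥

theorem sSupIndep_insert {α : Type*} [CompleteLattice α] [IsModularLattice α] {s : Set α} {b : α}
    (hs : sSupIndep s) (hb : Disjoint (sSup s) b) : sSupIndep (insert b s) := by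
  intro a ha
  obtain rfl | hab := eq_or_ne a b
  · exact hb.symm.mono_right (sSup_le_sSup fun c hc ↦ hc.1.resolve_left hc.2)
  · have ha : a ∈ s := ha.resolve_left hab
    have hinsert : insert b s \ {a} = insert b (s \ {a}) :=
      Set.insert_sdiff_of_notMem _ (Ne.symm hab)
    have hsup : a ⊔ sSup (s \ {a}) ≤ sSup s :=
      sup_le (le_sSup ha) (sSup_le_sSup Set.sdiff_subset)
    rw [hinsert, sSup_insert, sup_comm]
    exact (hs ha).disjoint_sup_right_of_disjoint_sup_left (hb.mono_left hsup)

theorem exists_sSupIndep_isEssential_sSup {α : Type*} [CompleteLattice α] [IsModularLattice α]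
    [IsCompactlyGenerated α] {P : Set α} (hbot : ⊥ ∉ P) (hP : ∀ b ≠ ⊥, ∃ a ∈ P, a ≤ b) :
    ∃ s ⊆ P, sSupIndep s ∧ IsEssential (sSup s) := by
  obtain ⟨s, hs⟩ := zorn_subset {s : Set α | s ⊆ P ∧ sSupIndep s} fun c hc hchain ↦
    ⟨⋃₀ c, ⟨Set.sUnion_subset fun s hs ↦ (hc hs).1,
      iSupIndep_sUnion_of_directed hchain.directedOn fun s hs ↦ (hc hs).2⟩,
      fun s hs ↦ Set.subset_sUnion_of_mem hs⟩
  refine ⟨s, hs.prop.1, hs.prop.2, fun b hdisj ↦ ?_⟩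
  by_contra hb
  obtain ⟨a, haP, hab⟩ := hP b hb
  have hdisj : Disjoint (sSup s) a := hdisj.mono_right hab
  have has : a ∈ s := hs.mem_of_prop_insert
    ⟨Set.insert_subset haP hs.prop.1, sSupIndep_insert hs.prop.2 hdisj⟩
  exact hbot (hdisj.eq_bot_of_ge (le_sSup has) ▸ haP)

variable {R M Q : Type*} [Ring R] [AddCommGroup M] [Module R M] [AddCommGroup Q] [Module R Q]

theorem IsEssential.exists_smul_mem_ne_zero {N : Submodule R M} (hN : IsEssential N) {x : M}
    (hx : x ≠ 0) : ∃ r : R, r • x ∈ N ∧ r • x ≠ 0 := by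
  by_contra! h
  refine hx (span_singleton_eq_bot.1 (hN (R ∙ x) (disjoint_def.2 fun y hyN hyx ↦ ?_)))
  obtain ⟨r, rfl⟩ := mem_span_singleton.1 hyx
  exact h r hyN

variable (R M) in
theorem exists_iSupIndep_span_singleton_isEssential_span :
    ∃ A : Set M, 0 ∉ A ∧ iSupIndep (fun a : A ↦ R ∙ (a : M)) ∧ IsEssential (span R A) := by
  obtain ⟨s, hsub, hind, hess⟩ := exists_sSupIndep_isEssential_sSup
    (P := {N : Submodule R M | ∃ x ≠ 0, R ∙ x = N}) (by simp) fun N hN ↦ by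
      obtain ⟨x, hxN, hx⟩ := exists_mem_ne_zero_of_ne_bot hN
      exact ⟨_, ⟨x, hx, rfl⟩, (span_singleton_le_iff_mem ..).2 hxN⟩
  choose v hv0 hv using fun N : s ↦ hsub N.2
  have hspan : span R (Set.range v) = sSup s := by
    simp only [span_range_eq_iSup, hv, sSup_eq_iSup']
  refine ⟨Set.range v, by simpa using hv0, ?_, hspan ▸ hess⟩
  refine iSupIndep.comp' (f := Set.rangeFactorization v) ?_ Set.rangeFactorization_surjective
  have : (fun a : Set.range v ↦ R ∙ (a : M)) ∘ Set.rangeFactorization v = Subtype.val := funext hv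
  rw [this]
  exact (sSupIndep_iff _).1 hind

theorem IsEssential.injective_of_disjoint_ker {N : Submodule R M} (hN : IsEssential N)
    {f : M →ₗ[R] Q} (hf : Disjoint N f.ker) : Function.Injective f :=
  LinearMap.ker_eq_bot.1 (hN _ hf)

theorem exists_linearMap_comp_eq_of_ker_le {N : Type*} [AddCommGroup N] [Module R N]
    (hQ : Module.Baer R Q) {f : N →ₗ[R] M} {g : N →ₗ[R] Q} (h : f.ker ≤ g.ker) :
    ∃ φ : M →ₗ[R] Q, φ ∘ₗ f = g := by
  obtain ⟨φ, hφ⟩ := hQ.extension_property (f.ker.liftQ f le_rfl)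
    (LinearMap.ker_eq_bot.1 (ker_liftQ_eq_bot _ _ _ le_rfl)) (f.ker.liftQ g h)
  exact ⟨φ, by rw [← liftQ_mkQ f.ker f le_rfl, ← LinearMap.comp_assoc, hφ, liftQ_mkQ]⟩

variable {ι : Type*} {v : ι → M}

theorem smul_eq_zero_of_linearCombination_eq_zero (hv : iSupIndep fun i ↦ R ∙ v i) {n : ι →₀ R}
    (hn : Finsupp.linearCombination R v n = 0) (i : ι) : n i • v i = 0 := by
  by_cases hi : i ∈ n.support
  · exact (iSupIndep_iff_finsetSum_eq_zero_imp_eq_zero _).1 hv n.support (fun i ↦ n i • v i)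
      (fun i _ ↦ smul_mem _ _ (mem_span_singleton_self _)) hn i hi
  · rw [Finsupp.notMem_support_iff.1 hi, zero_smul]

theorem exists_linearMap_apply_eq_of_iSupIndep (hQ : Module.Baer R Q)
    (hv : iSupIndep fun i ↦ R ∙ v i) {q : ι → Q} (hq : ∀ i (r : R), r • v i = 0 → r • q i = 0) :
    ∃ φ : M →ₗ[R] Q, ∀ i, φ (v i) = q i := by
  obtain ⟨φ, hφ⟩ := exists_linearMap_comp_eq_of_ker_le hQ
    (f := Finsupp.linearCombination R v) (g := Finsupp.linearCombination R q) fun n hn ↦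
      Finset.sum_eq_zero fun i _ ↦ hq i _ (smul_eq_zero_of_linearCombination_eq_zero hv hn i)
  exact ⟨φ, fun i ↦ by simpa using congr($hφ (Finsupp.single i 1))⟩

end Essential

section Card

variable {G : Type*} [AddCommGroup G]

theorem baer_int_quotient_of_rat {V : Type*} [AddCommGroup V] [Module ℚ V] (K : Submodule ℤ V) :
    Module.Baer ℤ (V ⧸ K) := by
  have : DivisibleBy (V ⧸ K) ℤ := divisibleByOfSMulRightSurj _ _ fun {n} hn x ↦ by
    obtain ⟨x, rfl⟩ := K.mkQ_surjective x
    refine ⟨K.mkQ ((n : ℚ)⁻¹ • x), ?_⟩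
    simp only [← map_zsmul]
    rw [← Int.cast_smul_eq_zsmul ℚ n, smul_inv_smul₀ (Int.cast_ne_zero.2 hn)]
  exact Module.Baer.of_divisible _

theorem mk_finsupp_le_max_aleph0.{u, v} (α : Type u) (β : Type v) [Zero β] [Countable β] :
    #(α →₀ β) ≤ max (lift.{v} #α) ℵ₀ := by
  obtain hα | hα := finite_or_infinite α
  · exact mk_le_aleph0.trans (le_max_right _ _)
  obtain hβ | hβ := subsingleton_or_nontrivial β
  · exact mk_le_aleph0.trans (le_max_right _ _)
  · rw [mk_finsupp_lift_of_infinite]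
    exact max_le_max le_rfl (lift_le_aleph0.2 mk_le_aleph0)

theorem mk_le_max_aleph0_of_isEssential_span {A : Set G} (hA : IsEssential (span ℤ A)) :
    #G ≤ max #A ℵ₀ := by
  let f : (A →₀ ℤ) →ₗ[ℤ] G := Finsupp.linearCombination ℤ Subtype.val
  let i : (A →₀ ℤ) →ₗ[ℤ] (A →₀ ℚ) := Finsupp.mapRange.linearMap (Int.castAddHom ℚ).toIntLinearMap
  have hi : Function.Injective i := Finsupp.mapRange_injective _ (map_zero _) Int.cast_injective
  let K : Submodule ℤ (A →₀ ℚ) := f.ker.map i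
  have hker : (K.mkQ ∘ₗ i).ker = f.ker := by
    rw [LinearMap.ker_comp, ker_mkQ, comap_map_eq_of_injective hi]
  obtain ⟨φ, hφ⟩ := exists_linearMap_comp_eq_of_ker_le (baer_int_quotient_of_rat K) hker.ge
  have hdisj : Disjoint (span ℤ A) φ.ker := disjoint_def.2 fun x hx hx0 ↦ by
    obtain ⟨n, rfl⟩ := (Finsupp.mem_span_iff_linearCombination ℤ A x).1 hx
    have : n ∈ (φ ∘ₗ f).ker := hx0
    rwa [hφ, hker] at this
  calc #G ≤ #((A →₀ ℚ) ⧸ K) := mk_le_of_injective (hA.injective_of_disjoint_ker hdisj)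
    _ ≤ #(A →₀ ℚ) := mk_le_of_surjective K.mkQ_surjective
    _ ≤ max #A ℵ₀ := by simpa using mk_finsupp_le_max_aleph0 A ℚ

end Card

section Character

variable {G : Type*} [AddCommGroup G]

theorem exists_unitAddCircle_nsmul_eq_zero_and_le_norm {n : ℕ} (hn : n ≠ 1) :
    ∃ t : UnitAddCircle, n • t = 0 ∧ 1 / 3 ≤ ‖t‖ := by
  obtain ⟨x, hle, hge, hx⟩ : ∃ x : ℝ, x ≤ 1 / 2 ∧ 1 / 3 ≤ x ∧ ∃ k : ℤ, n * x = k := by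
    obtain rfl | hn0 := eq_or_ne n 0
    · exact ⟨1 / 2, le_rfl, by norm_num, 0, by simp⟩
    · have hpos : (0 : ℝ) < n := by positivity
      have hle : ((n / 2 : ℕ) : ℝ) * 2 ≤ n := by exact_mod_cast Nat.div_mul_le_self n 2
      have hge : (n : ℝ) ≤ ((n / 2 : ℕ) : ℝ) * 3 := by
        exact_mod_cast (by omega : n ≤ n / 2 * 3)
      refine ⟨(n / 2 : ℕ) / n, ?_, ?_, (n / 2 : ℕ), ?_⟩
      · rw [div_le_div_iff₀ hpos two_pos]; linarith
      · rw [div_le_div_iff₀ three_pos hpos]; linarith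
      · rw [mul_div_cancel₀ _ hpos.ne', Int.cast_natCast]
  have habs : |x| = x := abs_of_nonneg (by linarith)
  refine ⟨x, ?_, ?_⟩
  · obtain ⟨k, hk⟩ := hx
    rw [← AddCircle.coe_nsmul, nsmul_eq_mul, hk]
    exact (AddCircle.coe_eq_zero_iff 1).2 ⟨k, by simp⟩
  · rwa [(AddCircle.norm_coe_eq_abs_iff 1 one_ne_zero).2 (by rwa [habs, abs_one]), habs]

theorem exists_character_apply_eq_of_iSupIndep {ι : Type*} {v : ι → G}
    (hv : iSupIndep fun i ↦ ℤ ∙ v i) {q : ι → UnitAddCircle}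
    (hq : ∀ i (n : ℤ), n • v i = 0 → n • q i = 0) :
    ∃ χ : G →+ UnitAddCircle, ∀ i, χ (v i) = q i :=
  let ⟨φ, hφ⟩ := exists_linearMap_apply_eq_of_iSupIndep (Module.Baer.of_divisible _) hv hq
  ⟨φ.toAddMonoidHom, hφ⟩

theorem exists_character_le_norm_of_iSupIndep {ι : Type*} {v : ι → G}
    (hv : iSupIndep fun i ↦ ℤ ∙ v i) (hv0 : ∀ i, v i ≠ 0) :
    ∃ χ : G →+ UnitAddCircle, ∀ i, 1 / 3 ≤ ‖χ (v i)‖ := by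
  choose t ht hnorm using fun i ↦
    exists_unitAddCircle_nsmul_eq_zero_and_le_norm (AddMonoid.addOrderOf_eq_one_iff.not.2 (hv0 i))
  obtain ⟨χ, hχ⟩ := exists_character_apply_eq_of_iSupIndep hv fun i n hn ↦ by
    obtain ⟨m, rfl⟩ := addOrderOf_dvd_iff_zsmul_eq_zero.2 hn
    rw [mul_comm, mul_smul, natCast_zsmul, ht, smul_zero]
  exact ⟨χ, fun i ↦ (hχ i).symm ▸ hnorm i⟩

theorem exists_character_ne_zero {x : G} (hx : x ≠ 0) : ∃ χ : G →+ UnitAddCircle, χ x ≠ 0 := by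
  obtain ⟨χ, hχ⟩ := exists_character_le_norm_of_iSupIndep (v := fun _ : Unit ↦ x)
    (iSupIndep_subsingleton _) fun _ ↦ hx
  exact ⟨χ, norm_pos_iff.1 (lt_of_lt_of_le (by norm_num) (hχ ()))⟩

theorem exists_character_ne_zero_of_isEssential_span {A : Set G}
    (hind : iSupIndep fun a : A ↦ ℤ ∙ (a : G)) (hess : IsEssential (span ℤ A)) {x : G}
    (hx : x ≠ 0) : ∃ χ : G →+ UnitAddCircle, χ x ≠ 0 ∧ ∃ j, ∀ a ∈ A, a ≠ j → χ a = 0 := by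
  classical
  obtain ⟨r, hrA, hr⟩ := hess.exists_smul_mem_ne_zero hx
  obtain ⟨n, hn⟩ := (Finsupp.mem_span_iff_linearCombination ℤ A _).1 hrA
  obtain ⟨j, -, hj : n j • (j : G) ≠ 0⟩ := Finset.exists_ne_zero_of_sum_ne_zero (hn.trans_ne hr)
  obtain ⟨θ, hθ⟩ := exists_character_ne_zero hj
  obtain ⟨χ, hχ⟩ := exists_character_apply_eq_of_iSupIndep hind (q := Pi.single j (θ j))
    fun i m hm ↦ by
      obtain rfl | hij := eq_or_ne i j
      · rw [Pi.single_eq_same, ← map_zsmul, hm, map_zero]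
      · rw [Pi.single_eq_of_ne hij, smul_zero]
  have hrx : r • χ x = θ (n j • j) := by
    calc r • χ x = ∑ i ∈ n.support, n i • χ i := by
          rw [← map_zsmul, ← hn, Finsupp.linearCombination_apply, Finsupp.sum, map_sum]
          simp only [map_zsmul]
      _ = n j • χ j := Finset.sum_eq_single j (fun i _ hij ↦ by
          rw [hχ, Pi.single_eq_of_ne hij, smul_zero]) fun hjn ↦ by
          rw [Finsupp.notMem_support_iff.1 hjn, zero_smul]
      _ = θ (n j • j) := by rw [hχ, Pi.single_eq_same, map_zsmul]
  refine ⟨χ, fun h0 ↦ hθ (by rw [← hrx, h0, smul_zero]), j, fun a ha haj ↦ ?_⟩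
  exact (hχ ⟨a, ha⟩).trans (Pi.single_eq_of_ne (by simpa [Subtype.ext_iff] using haj) _)

end Character

section AccPt

theorem not_accPt_of_tendsto_cofinite {X Y : Type*} [TopologicalSpace X] [T1Space X]
    [TopologicalSpace Y] [T2Space Y] {A : Set X} {f : X → Y} {x : X} {y : Y}
    (hf : ContinuousAt f x) (hlim : Tendsto f (cofinite ⊓ 𝓟 A) (𝓝 y)) (hne : f x ≠ y) :
    ¬ AccPt x (𝓟 A) := fun (_ : NeBot (𝓝[≠] x ⊓ 𝓟 A)) ↦
  hne <| tendsto_nhds_unique (hf.mono_left (inf_le_left.trans nhdsWithin_le_nhds))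
    (hlim.mono_left (inf_le_inf_right _ (nhdsNE_le_cofinite x)))

theorem not_accPt_of_isClosed_of_notMem {X : Type*} [TopologicalSpace X] {A C : Set X} {x : X}
    (hC : IsClosed C) (hAC : A ⊆ C) (hx : x ∉ C) : ¬ AccPt x (𝓟 A) := fun h ↦
  hx (isClosed_iff_clusterPt.1 hC x (h.clusterPt.mono (principal_mono.2 hAC)))

theorem accPt_principal_of_tendsto_nhdsNE {ι X Y : Type*} [TopologicalSpace X] [TopologicalSpace Y]
    {l : Filter ι} [l.NeBot] {f : ι → X} {x : X} (hf : Tendsto f l (𝓝[≠] x)) {g : X → Y}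
    (hg : ContinuousAt g x) (hg_inj : Function.Injective g) {B : Set Y}
    (hB : ∀ᶠ i in l, g (f i) ∈ B) : AccPt (g x) (𝓟 B) := by
  have hacc : AccPt x (map f l) := NeBot.mono inferInstance (le_inf hf le_rfl)
  exact (hacc.map hg hg_inj).mono (tendsto_principal.2 hB)

theorem tendsto_cofinite_inf_principal_range {ι X Y : Type*} {c : ι → X} {f : X → Y} {l : Filter Y}
    (h : Tendsto (f ∘ c) cofinite l) : Tendsto f (cofinite ⊓ 𝓟 (Set.range c)) l := by
  intro U hU
  have hfin : (c '' {i | f (c i) ∉ U}).Finite := (mem_cofinite.1 (h hU)).image c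
  refine mem_inf_principal.2 (hfin.subset ?_)
  intro x hx
  obtain ⟨⟨i, rfl⟩, hi⟩ : x ∈ Set.range c ∧ f x ∉ U := by simpa using hx
  exact ⟨i, hi, rfl⟩

theorem tendsto_cofinite_or_eventually_eq_const {α β : Type*} (F : Ultrafilter α) (f : α → β) :
    Tendsto f F cofinite ∨ ∃ b, ∀ᶠ a in F, f a = b :=
  (F.map f).le_cofinite_or_eq_pure.imp_right fun ⟨b, hb⟩ ↦
    ⟨b, tendsto_pure.1 congr(($hb : Filter β)).le⟩

theorem exists_ultrafilter_tendsto_sub_of_accPt {G : Type*} [Sub G] [TopologicalSpace G]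
    {A B : Set G} {x : G} (h : AccPt x (𝓟 (A - B))) :
    ∃ F : Ultrafilter (G × G), Tendsto (fun p : G × G ↦ p.1 - p.2) F (𝓝[≠] x) ∧
      (∀ᶠ p : G × G in F, p.1 ∈ A) ∧ ∀ᶠ p : G × G in F, p.2 ∈ B := by
  have hne : (comap (fun p : G × G ↦ p.1 - p.2) (𝓝[≠] x) ⊓ 𝓟 (A ×ˢ B)).NeBot := by
    rw [← map_neBot_iff (fun p : G × G ↦ p.1 - p.2), Filter.push_pull', map_principal,
      Set.image_prod, Set.image2_sub]
    exact h
  obtain ⟨F, hF⟩ := exists_ultrafilter_iff.2 hne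
  have hmem : A ×ˢ B ∈ F := le_principal_iff.1 (hF.trans inf_le_right)
  exact ⟨F, tendsto_iff_comap.2 (hF.trans inf_le_left), mem_of_superset hmem fun p hp ↦ hp.1,
    mem_of_superset hmem fun p hp ↦ hp.2⟩

theorem not_accPt_sub_of_tendsto_cofinite {G H : Type*} [AddCommGroup G] [TopologicalSpace G]
    [IsTopologicalAddGroup G] [AddCommGroup H] [TopologicalSpace H] [IsTopologicalAddGroup H]
    [T2Space H] {A : Set G} (hA : ∀ y, ¬ AccPt y (𝓟 A)) {χ : G →+ H} (hχ : Continuous χ)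
    (hlim : Tendsto χ (cofinite ⊓ 𝓟 A) (𝓝 0)) {x : G} (hx : χ x ≠ 0) :
    ¬ AccPt x (𝓟 (A - A)) := by
  intro hacc
  obtain ⟨F, hsub, hfst, hsnd⟩ := exists_ultrafilter_tendsto_sub_of_accPt hacc
  obtain hfst_inf | ⟨a, ha⟩ := tendsto_cofinite_or_eventually_eq_const F Prod.fst
  · obtain hsnd_inf | ⟨b, hb⟩ := tendsto_cofinite_or_eventually_eq_const F Prod.snd
    · have hfst0 : Tendsto (fun p : G × G ↦ χ p.1) F (𝓝 0) :=
        hlim.comp (tendsto_inf.2 ⟨hfst_inf, tendsto_principal.2 hfst⟩)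
      have hsnd0 : Tendsto (fun p : G × G ↦ χ p.2) F (𝓝 0) :=
        hlim.comp (tendsto_inf.2 ⟨hsnd_inf, tendsto_principal.2 hsnd⟩)
      have hdiff0 : Tendsto (fun p : G × G ↦ χ (p.1 - p.2)) F (𝓝 0) := by
        simpa using hfst0.sub hsnd0
      exact hx (tendsto_nhds_unique
        ((hχ.tendsto x).comp (hsub.mono_right nhdsWithin_le_nhds)) hdiff0)
    · refine hA (x + b) (accPt_principal_of_tendsto_nhdsNE hsub (g := (· + b))
        (by fun_prop) (add_left_injective b) ?_)
      filter_upwards [hfst, hb] with p hp hpb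
      rwa [← hpb, sub_add_cancel]
  · refine hA (a - x) (accPt_principal_of_tendsto_nhdsNE hsub (g := (a - ·))
      (by fun_prop) sub_right_injective ?_)
    filter_upwards [hsnd, ha] with p hp hpa
    rwa [← hpa, sub_sub_cancel]

end AccPt

section Bohr

variable {G : Type*} [AddCommGroup G]

theorem tendsto_nhds_bohrTopology_iff {ι : Type*} {f : ι → G} {l : Filter ι} {x : G} :
    Tendsto f l (@nhds G (bohrTopology G) x) ↔
      ∀ χ : G →+ UnitAddCircle, Tendsto (χ ∘ f) l (𝓝 (χ x)) := by
  unfold bohrTopology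
  simp only [nhds_iInf, tendsto_iInf, nhds_induced, tendsto_comap_iff]

theorem continuous_bohrTopology (χ : G →+ UnitAddCircle) :
    Continuous[bohrTopology G, inferInstance] χ :=
  continuous_iInf_dom continuous_induced_dom

theorem isTopologicalAddGroup_bohrTopology : @IsTopologicalAddGroup G (bohrTopology G) _ :=
  topologicalAddGroup_iInf fun χ ↦ topologicalAddGroup_induced χ

theorem t2Space_bohrTopology : @T2Space G (bohrTopology G) := by
  let := bohrTopology G
  refine ⟨fun x y hxy ↦ ?_⟩
  obtain ⟨χ, hχ⟩ := exists_character_ne_zero (sub_ne_zero.2 hxy)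
  exact separated_by_continuous (continuous_bohrTopology χ) (by rwa [map_sub, sub_ne_zero] at hχ)

theorem accPt_zero_sub_bohrTopology {A : Set G} (hA : A.Infinite) :
    @AccPt G (bohrTopology G) 0 (𝓟 (A - A)) := by
  let := bohrTopology G
  have : (cofinite ⊓ 𝓟 A).NeBot := hA.cofinite_inf_principal_neBot
  let F : Ultrafilter G := Ultrafilter.of (cofinite ⊓ 𝓟 A)
  have hF_cofinite : (F : Filter G) ≤ cofinite := (Ultrafilter.of_le _).trans inf_le_left
  have hF_mem : ∀ᶠ a in (F : Filter G), a ∈ A :=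
    (Ultrafilter.of_le _).trans inf_le_right (mem_principal_self A)
  have hlim : Tendsto (fun p : G × G ↦ p.1 - p.2) (F ×ˢ F) (𝓝 0) := by
    refine tendsto_nhds_bohrTopology_iff.2 fun χ ↦ ?_
    have hχ : Tendsto χ F (𝓝 (F.map χ).lim) := (F.map χ).le_nhds_lim
    simpa [Function.comp_def] using
      (hχ.comp tendsto_fst).sub (hχ.comp (tendsto_snd (f := (F : Filter G))))
  have hfreq : ∃ᶠ p in (F : Filter G).curry F, p.1 - p.2 ≠ 0 ∧ p.1 - p.2 ∈ A - A := by
    refine ((frequently_curry_iff _).2 (hF_mem.mono fun a ha ↦ ?_).frequently)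
    have hne : ∀ᶠ b in (F : Filter G), b ≠ a := hF_cofinite (by simp)
    exact ((hne.and hF_mem).mono fun b hb ↦
      ⟨sub_ne_zero.2 hb.1.symm, Set.sub_mem_sub ha hb.2⟩).frequently
  exact accPt_iff_frequently.2 ((hlim.mono_left curry_le_prod).frequently hfreq)

end Bohr

section Haar

open MeasureTheory

variable {K : Type*} [AddCommGroup K]

theorem integral_toCircle_eq_zero [MeasurableSpace K] [MeasurableAdd K] (μ : Measure K)
    [μ.IsAddLeftInvariant] {χ : K →+ UnitAddCircle} (hχ : χ ≠ 0) :
    ∫ k, ((χ k).toCircle : ℂ) ∂μ = 0 := by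
  obtain ⟨k₀, hk₀⟩ := DFunLike.ne_iff.1 hχ
  have hne : ((χ k₀).toCircle : ℂ) ≠ 1 := fun h ↦
    hk₀ (AddCircle.injective_toCircle one_ne_zero (by simpa [Circle.ext_iff] using h))
  have hmul : ((χ k₀).toCircle : ℂ) * ∫ k, ((χ k).toCircle : ℂ) ∂μ
      = ∫ k, ((χ k).toCircle : ℂ) ∂μ := by
    rw [← integral_const_mul, ← integral_add_left_eq_self (fun k ↦ ((χ k).toCircle : ℂ)) k₀]
    simp only [map_add, AddCircle.toCircle_add, Circle.coe_mul]
  exact (mul_left_eq_self₀.1 hmul).resolve_left hne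

theorem exists_not_tendsto_zero_of_compactSpace [TopologicalSpace K] [IsTopologicalAddGroup K]
    [CompactSpace K] {ι : Type*} {l : Filter ι} [l.NeBot] [l.IsCountablyGenerated]
    {χ : ι → K →+ UnitAddCircle} (hcont : ∀ i, Continuous (χ i)) (hne : ∀ i, χ i ≠ 0) :
    ∃ k, ¬ Tendsto (fun i ↦ χ i k) l (𝓝 0) := by
  by_contra! hlim
  borelize K
  let μ : Measure K := Measure.addHaar
  have hint : Tendsto (fun i ↦ ∫ k, ((χ i k).toCircle : ℂ) ∂μ) l (𝓝 (∫ _, 1 ∂μ)) := by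
    have hcirc : Continuous fun z : UnitAddCircle ↦ (z.toCircle : ℂ) :=
      continuous_subtype_val.comp AddCircle.continuous_toCircle
    refine tendsto_integral_filter_of_dominated_convergence (fun _ ↦ 1)
      (.of_forall fun i ↦ (hcirc.comp (hcont i)).aestronglyMeasurable_of_compactSpace)
      (.of_forall fun i ↦ .of_forall fun k ↦ (Circle.norm_coe _).le) (integrable_const _)
      (.of_forall fun k ↦ ?_)
    simpa [Function.comp_def] using hcirc.continuousAt.tendsto.comp (hlim k)
  simp only [integral_toCircle_eq_zero μ (hne _), integral_const] at hint
  have hzero : μ.real Set.univ = 0 := by simpa using tendsto_nhds_unique hint tendsto_const_nhds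
  exact (isOpen_univ.measure_pos μ Set.univ_nonempty).ne' ((measureReal_eq_zero_iff).1 hzero)

end Haar

section Dual

variable {G : Type*} [AddCommGroup G]

theorem exists_character_not_tendsto_zero {ι : Type*} {l : Filter ι} [l.NeBot]
    [l.IsCountablyGenerated] {c : ι → G} (hc : ∀ i, c i ≠ 0) :
    ∃ ψ : G →+ UnitAddCircle, ¬ Tendsto (ψ ∘ c) l (𝓝 0) := by
  let : TopologicalSpace G := ⊥
  have : DiscreteTopology G := ⟨rfl⟩
  let ev (g : G) : (G →ₜ+ UnitAddCircle) →+ UnitAddCircle :=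
    { toFun ψ := ψ g, map_zero' := rfl, map_add' _ _ := rfl }
  have hev_ne (i : ι) : ev (c i) ≠ 0 := fun h ↦ by
    obtain ⟨χ, hχ⟩ := exists_character_ne_zero (hc i)
    exact hχ congr($h ⟨χ, continuous_of_discreteTopology⟩)
  obtain ⟨ψ, hψ⟩ := exists_not_tendsto_zero_of_compactSpace (l := l)
    (fun i ↦ show Continuous (ev (c i)) from continuous_eval_const (c i)) hev_ne
  exact ⟨ψ, hψ⟩

theorem exists_seq_ne_zero_forall_tendsto_zero [Infinite G] {ι H : Type*} [Countable ι]
    [AddCommGroup H] [TopologicalSpace H] [IsTopologicalAddGroup H] [CompactSpace H]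
    [FirstCountableTopology H] (χ : ι → G →+ H) :
    ∃ c : ℕ → G, (∀ n, c n ≠ 0) ∧ ∀ i, Tendsto (χ i ∘ c) atTop (𝓝 0) := by
  let s := Infinite.natEmbedding G
  obtain ⟨p, φ, hφ, hlim⟩ := CompactSpace.tendsto_subseq fun n i ↦ χ i (s n)
  refine ⟨fun n ↦ s (φ (n + 1)) - s (φ n), fun n ↦ ?_, fun i ↦ ?_⟩
  · exact sub_ne_zero.2 ((s.injective.comp hφ.injective).ne n.succ_ne_self)
  · have hi : Tendsto (fun n ↦ χ i (s (φ n))) atTop (𝓝 (p i)) := tendsto_pi_nhds.1 hlim i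
    simpa [Function.comp_def] using ((tendsto_add_atTop_iff_nat 1).2 hi).sub hi

end Dual

section NullSeparating

/-- A subset `A` of an abelian group is null-separating if the characters that tend to `0` along `A`
separate the points of the group, and some character is bounded away from `0` on `A`. The first
property excludes nonzero limit points of `A` and of `A - A` in the Bohr topology, the second
excludes `0` as a limit point of `A`. -/
structure IsNullSeparating {G : Type*} [AddCommGroup G] (A : Set G) : Prop where
  exists_tendsto_zero : ∀ x ≠ 0, ∃ χ : G →+ UnitAddCircle,
    χ x ≠ 0 ∧ Tendsto χ (cofinite ⊓ 𝓟 A) (𝓝 0)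
  exists_le_norm : ∃ ψ : G →+ UnitAddCircle, ∃ δ > 0, ∀ a ∈ A, δ ≤ ‖ψ a‖

variable {G : Type*} [AddCommGroup G] {A : Set G}

namespace IsNullSeparating

theorem not_accPt_bohrTopology (hA : IsNullSeparating A) (x : G) :
    ¬ @AccPt G (bohrTopology G) x (𝓟 A) := by
  let := bohrTopology G
  have : T2Space G := t2Space_bohrTopology
  obtain rfl | hx := eq_or_ne x 0
  · obtain ⟨ψ, δ, hδ, hψ⟩ := hA.exists_le_norm
    exact not_accPt_of_isClosed_of_notMem (C := {y | δ ≤ ‖ψ y‖})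
      (isClosed_le continuous_const (continuous_bohrTopology ψ).norm) hψ (by simpa using hδ)
  · obtain ⟨χ, hχx, hχ⟩ := hA.exists_tendsto_zero x hx
    exact not_accPt_of_tendsto_cofinite (continuous_bohrTopology χ).continuousAt hχ hχx

theorem accPt_sub_bohrTopology_iff (hA : IsNullSeparating A) (hA_inf : A.Infinite) (x : G) :
    @AccPt G (bohrTopology G) x (𝓟 (A - A)) ↔ x = 0 := by
  let := bohrTopology G
  have : IsTopologicalAddGroup G := isTopologicalAddGroup_bohrTopology
  refine ⟨fun hacc ↦ of_not_not fun hx ↦ ?_, fun hx ↦ hx ▸ accPt_zero_sub_bohrTopology hA_inf⟩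
  obtain ⟨χ, hχx, hχ⟩ := hA.exists_tendsto_zero x hx
  exact not_accPt_sub_of_tendsto_cofinite hA.not_accPt_bohrTopology (continuous_bohrTopology χ) hχ
    hχx hacc

end IsNullSeparating

theorem isNullSeparating_of_isEssential_span (hA0 : 0 ∉ A)
    (hind : iSupIndep fun a : A ↦ ℤ ∙ (a : G)) (hess : IsEssential (span ℤ A)) :
    IsNullSeparating A where
  exists_tendsto_zero x hx := by
    obtain ⟨χ, hχx, j, hχ⟩ := exists_character_ne_zero_of_isEssential_span hind hess hx
    refine ⟨χ, hχx, tendsto_nhds_of_eventually_eq (eventually_inf_principal.2 ?_)⟩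
    filter_upwards [(Set.finite_singleton j).compl_mem_cofinite] with a haj ha
    exact hχ a ha haj
  exists_le_norm := by
    obtain ⟨ψ, hψ⟩ := exists_character_le_norm_of_iSupIndep hind
      fun a ↦ ne_of_mem_of_not_mem a.2 hA0
    exact ⟨ψ, 1 / 3, by norm_num, fun a ha ↦ hψ ⟨a, ha⟩⟩

theorem exists_subseq_le_norm {E : Type*} [SeminormedAddGroup E] {u : ℕ → E}
    (hu : ¬ Tendsto u atTop (𝓝 0)) :
    ∃ δ > 0, ∃ φ : ℕ → ℕ, StrictMono φ ∧ ∀ n, δ ≤ ‖u (φ n)‖ := by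
  simp only [Metric.tendsto_nhds, dist_zero_right, not_forall, not_eventually, not_lt] at hu
  obtain ⟨δ, hδ, hfreq⟩ := hu
  exact ⟨δ, hδ, extraction_of_frequently_atTop hfreq⟩

theorem infinite_range_of_tendsto_cofinite {ι X : Type*} {l : Filter ι} [l.NeBot] {c : ι → X}
    (hc : Tendsto c l cofinite) : (Set.range c).Infinite := fun hfin ↦ by
  obtain ⟨i, hi⟩ := (hc.eventually hfin.compl_mem_cofinite).exists
  exact hi ⟨i, rfl⟩

theorem exists_infinite_isNullSeparating_of_countable [Infinite G] [Countable G] :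
    ∃ A : Set G, A.Infinite ∧ IsNullSeparating A := by
  choose χ hχ using fun x : {x : G // x ≠ 0} ↦ exists_character_ne_zero x.2
  obtain ⟨c, hc0, hc⟩ := exists_seq_ne_zero_forall_tendsto_zero χ
  obtain ⟨ψ, hψ⟩ := exists_character_not_tendsto_zero (l := atTop) hc0
  obtain ⟨δ, hδ, φ, hφ, hle⟩ := exists_subseq_le_norm hψ
  have hnull (x) : Tendsto (χ x ∘ c ∘ φ) cofinite (𝓝 0) :=
    Nat.cofinite_eq_atTop ▸ (hc x).comp hφ.tendsto_atTop
  have hescape : Tendsto (c ∘ φ) cofinite cofinite := by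
    refine le_cofinite_iff_eventually_ne.2 fun x ↦ eventually_map.2 ?_
    obtain rfl | hx := eq_or_ne x 0
    · exact .of_forall fun n ↦ hc0 (φ n)
    · exact ((hnull ⟨x, hx⟩).eventually_ne (hχ ⟨x, hx⟩).symm).mono fun n hn h ↦ hn congr(χ _ $h)
  refine ⟨Set.range (c ∘ φ), infinite_range_of_tendsto_cofinite hescape, fun x hx ↦
    ⟨χ ⟨x, hx⟩, hχ _, tendsto_cofinite_inf_principal_range (hnull _)⟩,
    ψ, δ, hδ, Set.forall_mem_range.2 hle⟩

variable (G) in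
theorem exists_mk_eq_isNullSeparating [Infinite G] :
    ∃ A : Set G, #A = #G ∧ IsNullSeparating A := by
  obtain hG | hG := le_or_gt #G ℵ₀
  · have : Countable G := mk_le_aleph0_iff.1 hG
    obtain ⟨A, hA_inf, hA⟩ := exists_infinite_isNullSeparating_of_countable (G := G)
    exact ⟨A, (mk_set_le A).antisymm (hG.trans (infinite_iff.1 hA_inf.to_subtype)), hA⟩
  · obtain ⟨A, hA0, hind, hess⟩ := exists_iSupIndep_span_singleton_isEssential_span ℤ G
    refine ⟨A, (mk_set_le A).antisymm ?_, isNullSeparating_of_isEssential_span hA0 hind hess⟩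
    exact (le_max_iff.1 (mk_le_max_aleph0_of_isEssential_span hess)).resolve_right hG.not_ge

end NullSeparating

end

/-- (Kunen–Rudin) Every infinite abelian group `G` contains a set `A` with `|A| = |G|`,
relatively discrete in `G^#`, such that `0` is the only limit point of `A - A` in `G^#`. -/
theorem bohr_exists_discrete_with_unique_limit_point (G : Type*) [AddCommGroup G] [Infinite G] :
    letI := bohrTopology G
    ∃ A : Set G, Cardinal.mk A = Cardinal.mk G ∧ DiscreteTopology A ∧
      ∀ x : G, AccPt x (Filter.principal (A - A)) ↔ x = 0 := by
  let := bohrTopology G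
  obtain ⟨A, hcard, hA⟩ := exists_mk_eq_isNullSeparating G
  have hA_inf : A.Infinite := Set.infinite_coe_iff.1
    (Cardinal.infinite_iff.2 (hcard ▸ Cardinal.infinite_iff.1 ‹Infinite G›))
  exact ⟨A, hcard, discreteTopology_of_noAccPts fun x _ ↦ hA.not_accPt_bohrTopology x,
    hA.accPt_sub_bohrTopology_iff hA_inf⟩
end

section
/- For distinct primes p and q, the spaces (⊕_ω ℤ/pℤ)^# and (⊕_ω ℤ/qℤ)^# are not homeomorphic, where ⊕_ω denotes the direct sum of countably many copies. -/
open scoped Pointwise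

/-!
Let `f` be a map from an elementary abelian `p`-group to a vector space over `ZMod q`, continuous at
`0` for the Bohr topologies, let `x₀, x₁, …` be independent in the domain, and put
`g s = f (x_{s₁} + ⋯ + x_{s₂ₚ})` for increasing `2p`-tuples `s`. For each functional `χ`, continuity
yields a finite colouring of `ℕ` such that `χ (g s) = χ (f 0)` as soon as `p` entries of `s` share
one colour and the other `p` entries share one colour, because the sum is then killed by finitely
many prescribed characters.

* On an infinite set of indices, `g` separates: `g s = v₀ + d₁(s₁) + ⋯ + d₂ₚ(s₂ₚ)`. The last
  variable is split off first. Consider the sequences `g(s, ·)` modulo eventually constant ones. If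
  there were infinitely many classes over every infinite set of indices, one could choose
  independent ones, one for each colour, and a functional that is generic in the sense of Baire
  category would violate monochromaticity. Hence there are only finitely many classes on some
  infinite set, and by Ramsey's theorem just one on a smaller one.
* Comparing tuples with the colour of `i` on a `p`-element set `S` of positions and that of `j`
  elsewhere shows that `χ ∘ ∑_{k ∈ S} d_k` is eventually constant for all `χ` and `S`. Hence so is
  `∑_{k ∈ S} d_k`, again by genericity, and therefore every `d_k`, as `p` is invertible modulo `q`.

So `g` is constant on the increasing tuples from an infinite set, and `f` is not injective.
-/

open Filter Set Topology

/-- The strictly increasing `n`-tuples with entries in `A`, i.e. the `n`-element subsets of `A`. The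
entries are listed in order because functions of tuples are not assumed to be symmetric. -/
def increasingTuples (A : Set ℕ) (n : ℕ) : Set (Fin n → ℕ) :=
  {s | StrictMono s ∧ ∀ k, s k ∈ A}

section Tuples

variable {A B : Set ℕ} {n : ℕ}

lemma increasingTuples_mono (h : A ⊆ B) : increasingTuples A n ⊆ increasingTuples B n :=
  fun _ hs ↦ ⟨hs.1, fun k ↦ h (hs.2 k)⟩

lemma eventually_forall_apply_lt (s : Fin n → ℕ) : ∀ᶠ i in atTop, ∀ k, s k < i :=
  eventually_all.2 fun k ↦ eventually_gt_atTop (s k)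

lemma strictMono_snoc {s : Fin n → ℕ} {i : ℕ} :
    StrictMono (Fin.snoc s i : Fin (n + 1) → ℕ) ↔ StrictMono s ∧ ∀ k, s k < i := by
  refine ⟨fun h ↦ ⟨fun a b hab ↦ ?_, fun k ↦ ?_⟩, fun ⟨hs, hi⟩ a b hab ↦ ?_⟩
  · simpa using h (Fin.castSucc_lt_castSucc_iff.2 hab)
  · simpa using h (Fin.castSucc_lt_last k)
  · induction b using Fin.lastCases with
    | last =>
      obtain ⟨a, rfl⟩ := Fin.exists_castSucc_eq.2 hab.ne
      simpa using hi a
    | cast b =>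
      obtain ⟨a, rfl⟩ := Fin.exists_castSucc_eq.2 (hab.trans (Fin.castSucc_lt_last b)).ne
      simpa using hs (Fin.castSucc_lt_castSucc_iff.1 hab)

lemma snoc_mem_increasingTuples {s : Fin n → ℕ} {i : ℕ} :
    (Fin.snoc s i : Fin (n + 1) → ℕ) ∈ increasingTuples A (n + 1) ↔
      s ∈ increasingTuples A n ∧ i ∈ A ∧ ∀ k, s k < i := by
  simp only [increasingTuples, mem_ofPred_eq, strictMono_snoc, Fin.forall_fin_succ',
    Fin.snoc_castSucc, Fin.snoc_last]
  tauto

lemma init_mem_increasingTuples {s : Fin (n + 1) → ℕ} (hs : s ∈ increasingTuples A (n + 1)) :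
    Fin.init s ∈ increasingTuples A n :=
  (snoc_mem_increasingTuples.1 ((Fin.snoc_init_self s).symm ▸ hs)).1

lemma exists_strictMono_forall_mem {P : Fin n → Set ℕ} (hP : ∀ k, (P k).Infinite) :
    ∃ s : Fin n → ℕ, StrictMono s ∧ ∀ k, s k ∈ P k := by
  induction n with
  | zero => exact ⟨Fin.elim0, fun k ↦ k.elim0, fun k ↦ k.elim0⟩
  | succ n ih =>
    obtain ⟨s, hs, hsP⟩ := ih fun k ↦ hP k.castSucc
    obtain ⟨i, hiP, hsi⟩ := ((Nat.frequently_atTop_iff_infinite.2 (hP (Fin.last n))).and_eventually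
      (eventually_forall_apply_lt s)).exists
    exact ⟨Fin.snoc s i, strictMono_snoc.2 ⟨hs, hsi⟩,
      Fin.forall_fin_succ'.2 ⟨fun k ↦ by simpa using hsP k, by rw [Fin.snoc_last]; exact hiP⟩⟩

lemma increasingTuples_nonempty (hA : A.Infinite) : (increasingTuples A n).Nonempty :=
  exists_strictMono_forall_mem fun _ ↦ hA

lemma neBot_atTop_inf_principal (hA : A.Infinite) : (atTop ⊓ 𝓟 A).NeBot :=
  frequently_mem_iff_neBot.1 (Nat.frequently_atTop_iff_infinite.2 hA)

lemma eventually_infinite_inter_fiber {κ : Type*} [Finite κ] (c : ℕ → κ) (A : Set ℕ) :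
    ∀ᶠ i in atTop ⊓ 𝓟 A, (A ∩ c ⁻¹' {c i}).Infinite := by
  have h (l : κ) : ∀ᶠ i in atTop ⊓ 𝓟 A, c i = l → (A ∩ c ⁻¹' {l}).Infinite := by
    by_cases hl : (A ∩ c ⁻¹' {l}).Infinite
    · exact .of_forall fun _ _ ↦ hl
    · rw [eventually_inf_principal, ← Nat.cofinite_eq_atTop]
      filter_upwards [(not_infinite.1 hl).compl_mem_cofinite] with i hi hiA hil
      exact (hi ⟨hiA, hil⟩).elim
  filter_upwards [eventually_all.2 h] with i hi using hi _ rfl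

lemma exists_infinite_subset_forall_eventually_or {ι : Type*} [Countable ι] (P : ι → ℕ → Prop)
    (hA : A.Infinite) : ∃ B ⊆ A, B.Infinite ∧
      ∀ j, (∀ᶠ i in atTop ⊓ 𝓟 B, P j i) ∨ ∀ᶠ i in atTop ⊓ 𝓟 B, ¬ P j i := by
  classical
  have := hA.to_subtype
  let e := Nat.orderEmbeddingOfSet A
  obtain ⟨x, φ, hφ, hx⟩ := CompactSpace.tendsto_subseq fun i j ↦ decide (P j (e i))
  have he : StrictMono (e ∘ φ) := e.strictMono.comp hφ
  have eventually_range {Q : ℕ → Prop} (hQ : ∀ᶠ k in atTop, Q (e (φ k))) :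
      ∀ᶠ i in atTop ⊓ 𝓟 (range (e ∘ φ)), Q i := by
    obtain ⟨N, hN⟩ := eventually_atTop.1 hQ
    rw [eventually_inf_principal]
    filter_upwards [eventually_ge_atTop (e (φ N))]
    rintro _ hi ⟨k, rfl⟩
    exact hN k (he.le_iff_le.1 hi)
  refine ⟨range (e ∘ φ), ?_, infinite_range_of_injective he.injective, fun j ↦ ?_⟩
  · rintro _ ⟨k, rfl⟩
    exact Nat.orderEmbeddingOfSet_range A ▸ mem_range_self (φ k)
  · have hj : ∀ᶠ k in atTop, decide (P j (e (φ k))) = x j := by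
      simpa [nhds_discrete] using tendsto_pi_nhds.1 hx j
    cases hxj : x j <;> simp only [hxj, decide_eq_true_eq, decide_eq_false_iff_not] at hj
    · exact .inr (eventually_range hj)
    · exact .inl (eventually_range hj)

lemma exists_infinite_subset_forall_of_eventually {L : Filter ℕ} [L.NeBot]
    (hL : L ≤ atTop ⊓ 𝓟 A) {R : (Fin n → ℕ) → ℕ → Prop}
    (hR : ∀ s ∈ increasingTuples A n, ∀ᶠ i in L, R s i) :
    ∃ B ⊆ A, B.Infinite ∧ ∀ s i, Fin.snoc s i ∈ increasingTuples B (n + 1) → R s i := by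
  obtain ⟨hLtop, hLA⟩ := le_inf_iff.1 hL
  have hmemA : ∀ᶠ i in L, i ∈ A := le_principal_iff.1 hLA
  have hbox (m : ℕ) : ∀ᶠ i in L, m < i ∧ ∀ s ∈ Iic (fun _ ↦ m) ∩ increasingTuples A n, R s i :=
    ((eventually_gt_atTop m).filter_mono hLtop).and <|
      (eventually_all_finite ((finite_Iic _).inter_of_left _)).2 fun s hs ↦ hR s hs.2
  obtain ⟨x, hxA, hx⟩ := exists_seq_of_forall_finset_exists (· ∈ A)
    (fun m i ↦ m < i ∧ ∀ s ∈ Iic (fun _ ↦ m) ∩ increasingTuples A n, R s i) fun F _ ↦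
      (hmemA.and ((eventually_all_finset F).2 fun m _ ↦ hbox m)).exists
  have hmono : StrictMono x := fun a b hab ↦ (hx a b hab).1
  -- Dropping `x 0` makes `x j` an upper bound for the tuples below `x (j + 1)`, even if `n = 0`.
  have hsub : range (fun k ↦ x (k + 1)) ⊆ A := range_subset_iff.2 fun k ↦ hxA (k + 1)
  refine ⟨_, hsub, infinite_range_of_injective
    (hmono.injective.comp (add_left_injective 1)), fun s i hsi ↦ ?_⟩
  obtain ⟨hs, ⟨j, rfl⟩, hlt⟩ := snoc_mem_increasingTuples.1 hsi
  refine (hx j (j + 1) j.lt_succ_self).2 s ⟨fun k ↦ ?_, increasingTuples_mono hsub hs⟩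
  obtain ⟨a, ha⟩ := hs.2 k
  have hak : a + 1 < j + 1 := hmono.lt_iff_lt.1 (ha.trans_lt (hlt k))
  exact ha.symm.trans_le (hmono.monotone (Nat.lt_succ_iff.1 hak))

theorem exists_infinite_subset_eq_on_increasingTuples {κ : Type*} {T : Set κ} (hT : T.Finite)
    {col : (Fin n → ℕ) → κ} (hA : A.Infinite) (hcol : MapsTo col (increasingTuples A n) T) :
    ∃ B ⊆ A, B.Infinite ∧ ∃ y, ∀ s ∈ increasingTuples B n, col s = y := by
  induction n generalizing A with
  | zero =>
    exact ⟨A, Subset.rfl, hA, col Fin.elim0, fun s _ ↦ congrArg col (Subsingleton.elim _ _)⟩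
  | succ n ih =>
    have := neBot_atTop_inf_principal hA
    let U := Ultrafilter.of (atTop ⊓ 𝓟 A)
    have hU : (U : Filter ℕ) ≤ atTop ⊓ 𝓟 A := Ultrafilter.of_le _
    have hlim : ∀ s ∈ increasingTuples A n,
        ∃ y ∈ T, ∀ᶠ i in (U : Filter ℕ), col (Fin.snoc s i) = y := fun s hs ↦ by
      refine (Ultrafilter.eventually_exists_mem_iff hT).1 (hU ?_)
      filter_upwards [mem_inf_of_right (mem_principal_self A),
        mem_inf_of_left (eventually_forall_apply_lt s)] with i hi hsi
      exact ⟨_, hcol (snoc_mem_increasingTuples.2 ⟨hs, hi, hsi⟩), rfl⟩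
    have : Nonempty κ := ⟨col 0⟩
    choose! lim hlimT hlim using hlim
    obtain ⟨B, hBA, hB, hBlim⟩ := exists_infinite_subset_forall_of_eventually hU hlim
    obtain ⟨C, hCB, hC, y, hy⟩ := ih hB fun s hs ↦ hlimT s (increasingTuples_mono hBA hs)
    refine ⟨C, hCB.trans hBA, hC, y, fun s hs ↦ ?_⟩
    have hsnoc := hBlim (Fin.init s) (s (Fin.last n))
    rw [Fin.snoc_init_self] at hsnoc
    rw [hsnoc (increasingTuples_mono hCB hs), hy _ (init_mem_increasingTuples hs)]

end Tuples

section GenericFunctionals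

variable {K V : Type*} [Field K] [AddCommGroup V] [Module K V]

lemma exists_dual_eq_on_and_apply_eq (W : Submodule K V) (χ₀ : Module.Dual K V) {ι : Type*}
    {v : ι → V} (hv : LinearIndependent K (W.mkQ ∘ v)) (t : ι → K) :
    ∃ χ : Module.Dual K V, (∀ w ∈ W, χ w = χ₀ w) ∧ ∀ l, χ (v l) = t l := by
  obtain ⟨ρ, hρ⟩ := (Finsupp.linearCombination K (W.mkQ ∘ v)).exists_leftInverse_of_injective
    (LinearMap.ker_eq_bot.2 hv)
  have hρv (l : ι) : ρ (W.mkQ (v l)) = Finsupp.single l 1 := by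
    simpa using LinearMap.congr_fun hρ (Finsupp.single l 1)
  refine ⟨χ₀ + Finsupp.linearCombination K (fun l ↦ t l - χ₀ (v l)) ∘ₗ ρ ∘ₗ W.mkQ,
    fun w hw ↦ ?_, fun l ↦ ?_⟩
  · simp [(Submodule.Quotient.mk_eq_zero W).2 hw]
  · simp only [LinearMap.add_apply, LinearMap.comp_apply, hρv, Finsupp.linearCombination_single]
    simp

lemma finite_span_of_finite [Finite K] {s : Set V} (hs : s.Finite) :
    (Submodule.span K s : Set V).Finite := by
  have := FiniteDimensional.span_of_finite K hs
  have := Module.finite_of_finite K (M := Submodule.span K s)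
  exact toFinite _

theorem exists_dual_forall_exists_mem_apply_eq [Finite K] {J : Type*} [Countable J]
    {σ : J → Type*} [∀ j, Finite (σ j)] (T : ∀ j, Set (σ j → V))
    (hT : ∀ j (W : Submodule K V), (W : Set V).Finite →
      ∃ v ∈ T j, LinearIndependent K (W.mkQ ∘ v)) :
    ∃ χ : Module.Dual K V, ∀ j (t : σ j → K), ∃ v ∈ T j, ∀ l, χ (v l) = t l := by
  let : TopologicalSpace K := ⊥
  have : DiscreteTopology K := ⟨rfl⟩
  let X := range ((↑) : Module.Dual K V → V → K)
  have : CompactSpace X := isCompact_iff_compactSpace.1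
    (LinearMap.isClosed_range_coe V K (RingHom.id K)).isCompact
  let U (a : Σ j, σ j → K) : Set X := {x | ∃ v ∈ T a.1, ∀ l, x.1 (v l) = a.2 l}
  have hopen (a) : IsOpen (U a) := by
    have hU : U a = ⋃ v ∈ T a.1, ⋂ l, (fun x : X ↦ x.1 (v l)) ⁻¹' {a.2 l} := by
      ext x; simp [U]
    rw [hU]
    exact isOpen_biUnion fun v _ ↦ isOpen_iInter_of_finite fun l ↦
      (isOpen_discrete _).preimage ((continuous_apply (v l)).comp continuous_subtype_val)
  have hdense (a) : Dense (U a) := by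
    refine dense_iff_inter_open.2 fun O hO ⟨⟨_, χ₀, rfl⟩, hχ₀⟩ ↦ ?_
    obtain ⟨O', hO', rfl⟩ := isOpen_induced_iff.1 hO
    obtain ⟨F, u, hu, hFO⟩ := isOpen_pi_iff.1 hO' _ hχ₀
    obtain ⟨v, hvT, hv⟩ := hT a.1 (Submodule.span K F) (finite_span_of_finite F.finite_toSet)
    obtain ⟨χ, hχF, hχv⟩ := exists_dual_eq_on_and_apply_eq _ χ₀ hv a.2
    refine ⟨⟨χ, χ, rfl⟩, hFO fun w hw ↦ ?_, v, hvT, hχv⟩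
    simpa only [hχF w (Submodule.subset_span hw)] using (hu w hw).2
  obtain ⟨⟨_, χ, rfl⟩, hχ⟩ := (dense_iInter_of_isOpen hopen hdense).nonempty (h := ⟨⟨_, 0, rfl⟩⟩)
  exact ⟨χ, fun j t ↦ mem_iInter.1 hχ ⟨j, t⟩⟩

variable {α : Type*} {L : Filter α}

lemma eventuallyConst_of_sub_mem_finite {u : α → V} {W : Submodule K V} (hW : (W : Set V).Finite)
    {S : Set α} (hS : S ∈ L) (huW : ∀ i ∈ S, ∀ j ∈ S, u i - u j ∈ W)
    (hu : ∀ χ : Module.Dual K V, EventuallyConst (fun i ↦ χ (u i)) L) : EventuallyConst u L := by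
  rcases L.eq_or_neBot with rfl | _
  · exact .bot
  choose! χ hχ using fun (w : V) (hw : w ≠ 0) ↦
    not_forall.1 (mt (Module.forall_dual_apply_eq_zero_iff K w).1 hw)
  choose r hr using fun w ↦ eventuallyConst_iff_exists_eventuallyEq.1 (hu (χ w))
  have hr : ∀ᶠ i in L, ∀ w ∈ (W : Set V), χ w (u i) = r w :=
    (eventually_all_finite hW).2 fun w _ ↦ hr w
  obtain ⟨i₀, hi₀S, hi₀⟩ := (Eventually.and hS hr).exists
  refine eventuallyConst_iff_exists_eventuallyEq.2 ⟨u i₀, ?_⟩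
  filter_upwards [hS, hr] with i hiS hi
  have hw := huW i hiS i₀ hi₀S
  by_contra hne
  exact hχ _ (sub_ne_zero.2 hne) (by rw [map_sub, hi _ hw, hi₀ _ hw, sub_self])

theorem eventuallyConst_of_forall_dual [Finite K] [L.IsCountablyGenerated] {u : α → V}
    (hu : ∀ χ : Module.Dual K V, EventuallyConst (fun i ↦ χ (u i)) L) : EventuallyConst u L := by
  obtain ⟨B, hB⟩ := L.exists_antitone_basis
  by_contra hconst
  obtain ⟨χ, hχ⟩ := exists_dual_forall_exists_mem_apply_eq (K := K) (σ := fun _ : ℕ ↦ Unit)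
    (fun N ↦ {v | ∃ i ∈ B N, ∃ j ∈ B N, v = fun _ ↦ u i - u j}) fun N W hW ↦ by
      obtain ⟨i, hi, j, hj, hij⟩ : ∃ i ∈ B N, ∃ j ∈ B N, u i - u j ∉ W := by
        by_contra! h
        exact hconst (eventuallyConst_of_sub_mem_finite hW (hB.mem N) h hu)
      refine ⟨_, ⟨i, hi, j, hj, rfl⟩, linearIndependent_unique_iff.2 ?_⟩
      exact mt (Submodule.Quotient.mk_eq_zero W).1 hij
  obtain ⟨N, -, hN⟩ := hB.toHasBasis.eventuallyConst_iff.1 (hu χ)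
  obtain ⟨_, ⟨i, hi, j, hj, rfl⟩, hij⟩ := hχ N fun _ ↦ 1
  exact one_ne_zero ((hij ()).symm.trans (by rw [map_sub, hN i hi j hj, sub_self]))

variable (K V L) in
/-- The sequences that are eventually constant along `L`. The quotient of `α → V` by this submodule
is where two sequences that eventually differ by a constant are identified. -/
def eventuallyConstSubmodule : Submodule K (α → V) where
  carrier := {u | EventuallyConst u L}
  add_mem' hu hv := hu.add hv
  zero_mem' := .const 0
  smul_mem' a _ hu := hu.comp (a • ·)

lemma eventually_linearIndependent_mkQ [Finite K] {ι : Type*} [Finite ι] {f : ι → α → V}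
    (hf : LinearIndependent K ((eventuallyConstSubmodule K V L).mkQ ∘ f))
    (hspan : ∀ u ∈ Submodule.span K (range f), EventuallyConst u L ∨ Tendsto u L cofinite)
    {W : Submodule K V} (hW : (W : Set V).Finite) :
    ∀ᶠ i in L, LinearIndependent K fun l ↦ W.mkQ (f l i) := by
  have := Fintype.ofFinite ι
  have hcomb (a : ι → K) (ha : a ≠ 0) : ∀ᶠ i in L, (∑ l, a l • f l) i ∉ W := by
    have hmem : ∑ l, a l • f l ∈ Submodule.span K (range f) :=
      Submodule.sum_mem _ fun l _ ↦ Submodule.smul_mem _ _ (Submodule.subset_span ⟨l, rfl⟩)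
    refine (hspan _ hmem).resolve_left (fun hconst ↦ ha ?_) hW.compl_mem_cofinite
    refine funext (Fintype.linearIndependent_iff.1 hf a ?_)
    have hzero := (Submodule.Quotient.mk_eq_zero (eventuallyConstSubmodule K V L)).2 hconst
    rwa [← Submodule.mkQ_apply, map_sum, Finset.sum_congr rfl fun l _ ↦ map_smul _ (a l) (f l)]
      at hzero
  have hall : ∀ᶠ i in L, ∀ a : ι → K, a ≠ 0 → (∑ l, a l • f l) i ∉ W :=
    eventually_all.2 fun a ↦ eventually_imp_distrib_left.2 (hcomb a)
  filter_upwards [hall] with i hi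
  refine Fintype.linearIndependent_iff.2 fun a ha l ↦ ?_
  by_contra hl
  refine hi a (fun h ↦ hl (congrFun h l)) ?_
  rw [← SetLike.mem_coe, ← W.ker_mkQ]
  simpa [-Submodule.ker_mkQ] using ha

theorem exists_dual_frequently_apply_eq [Finite K] [L.NeBot] [L.IsCountablyGenerated]
    {J : Type*} [Countable J] {f : J → α → V}
    (hspan : ∀ u ∈ Submodule.span K (range f), EventuallyConst u L ∨ Tendsto u L cofinite) :
    ∃ χ : Module.Dual K V, ∀ (ι : Type*) [Finite ι] (e : ι → J),
      LinearIndependent K ((eventuallyConstSubmodule K V L).mkQ ∘ f ∘ e) →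
        ∀ t : ι → K, ∃ᶠ i in L, ∀ l, χ (f (e l) i) = t l := by
  obtain ⟨B, hB⟩ := L.exists_antitone_basis
  let Indep := {a : Σ m, Fin m → J //
    LinearIndependent K ((eventuallyConstSubmodule K V L).mkQ ∘ f ∘ a.2)}
  obtain ⟨χ, hχ⟩ := exists_dual_forall_exists_mem_apply_eq (K := K)
    (σ := fun a : Indep × ℕ ↦ Fin a.1.1.1)
    (fun a ↦ {v | ∃ i ∈ B a.2, v = fun l ↦ f (a.1.1.2 l) i}) fun ⟨a, N⟩ W hW ↦ by
      have hind := eventually_linearIndependent_mkQ a.2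
        (fun u hu ↦ hspan u (Submodule.span_mono (range_comp_subset_range _ _) hu)) hW
      obtain ⟨i, hi, hiB⟩ := (hind.and (hB.mem N)).exists
      exact ⟨_, ⟨i, hiB, rfl⟩, hi⟩
  refine ⟨χ, fun ι _ e he t ↦ hB.toHasBasis.frequently_iff.2 fun N _ ↦ ?_⟩
  obtain ⟨m, ⟨ε⟩⟩ := Finite.exists_equiv_fin ι
  obtain ⟨_, ⟨i, hi, rfl⟩, hit⟩ :=
    hχ (⟨⟨m, e ∘ ε.symm⟩, he.comp ε.symm ε.symm.injective⟩, N) (t ∘ ε.symm)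
  exact ⟨i, hi, fun l ↦ by simpa using hit (ε l)⟩

lemma exists_linearIndependent_forall_mem [Finite K] {ι : Type*} [Finite ι] {Λ : ι → Set V}
    (hΛ : ∀ l, (Λ l).Infinite) : ∃ y : ι → V, LinearIndependent K y ∧ ∀ l, y l ∈ Λ l := by
  obtain ⟨m, ⟨ε⟩⟩ := Finite.exists_equiv_fin ι
  suffices h : ∀ k (Λ : Fin k → Set V), (∀ l, (Λ l).Infinite) →
      ∃ y : Fin k → V, LinearIndependent K y ∧ ∀ l, y l ∈ Λ l by
    obtain ⟨y, hy, hyΛ⟩ := h m (Λ ∘ ε.symm) fun l ↦ hΛ _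
    exact ⟨y ∘ ε, hy.comp ε ε.injective, fun l ↦ by simpa using hyΛ (ε l)⟩
  intro k
  induction k with
  | zero => exact fun _ _ ↦ ⟨Fin.elim0, linearIndependent_empty_type, fun l ↦ l.elim0⟩
  | succ k ih =>
    intro Λ hΛ
    obtain ⟨y, hy, hyΛ⟩ := ih (fun l ↦ Λ l.castSucc) fun l ↦ hΛ _
    obtain ⟨z, hz, hzy⟩ := (hΛ (Fin.last k)).exists_notMem_finite
      (finite_span_of_finite (K := K) (finite_range y))
    exact ⟨Fin.snoc y z, linearIndependent_finSnoc.2 ⟨hy, hzy⟩,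
      Fin.forall_fin_succ'.2 ⟨by simpa using hyΛ, by simpa using hz⟩⟩

lemma forall_mem_of_forall_sum_mem {ι : Type*} [Fintype ι] {p : ℕ} (hp : p < Fintype.card ι)
    (hpK : (p : K) ≠ 0) {E : Submodule K V} {d : ι → V}
    (hd : ∀ S : Finset ι, S.card = p → ∑ k ∈ S, d k ∈ E) (k : ι) : d k ∈ E := by
  classical
  have hsub (l : ι) (hlk : l ≠ k) : d l - d k ∈ E := by
    obtain ⟨S, hS, hSc⟩ := Finset.exists_subset_card_eq (s := ({k, l} : Finset ι)ᶜ) (n := p - 1)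
      (by rw [Finset.card_compl, Finset.card_pair hlk.symm]; omega)
    have hp0 : p ≠ 0 := by rintro rfl; simp at hpK
    have hcard (j : ι) (hj : j ∈ ({k, l} : Finset ι)) : d j + ∑ i ∈ S, d i ∈ E := by
      have hjS : j ∉ S := fun h ↦ Finset.mem_compl.1 (hS h) hj
      rw [← Finset.sum_insert hjS]
      exact hd _ (by rw [Finset.card_insert_of_notMem hjS]; omega)
    simpa using E.sub_mem (hcard l (by simp)) (hcard k (by simp))
  obtain ⟨S, hS⟩ : ∃ S ⊆ ({k} : Finset ι)ᶜ, S.card = p := Finset.exists_subset_card_eq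
    (by rw [Finset.card_compl, Finset.card_singleton]; omega)
  have hsum : ∑ l ∈ S, d l - ∑ l ∈ S, (d l - d k) ∈ E :=
    E.sub_mem (hd S hS.2) (E.sum_mem fun l hl ↦ hsub l (by simpa using hS.1 hl))
  rw [Finset.sum_sub_distrib, Finset.sum_const, hS.2, sub_sub_cancel,
    ← Nat.cast_smul_eq_nsmul K] at hsum
  exact (E.smul_mem_iff hpK).1 hsum

end GenericFunctionals

section Separation

universe u

variable {K : Type u} {V : Type*} [Field K] [AddCommGroup V] [Module K V]
  {A : Set ℕ} {n : ℕ}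

lemma exists_infinite_subset_forall_eventuallyConst_or_tendsto {J β : Type*} [Countable J]
    (f : J → ℕ → β) (hA : A.Infinite) : ∃ B ⊆ A, B.Infinite ∧
      ∀ j, EventuallyConst (f j) (atTop ⊓ 𝓟 B) ∨ Tendsto (f j) (atTop ⊓ 𝓟 B) cofinite := by
  obtain ⟨B, hBA, hB, h⟩ := exists_infinite_subset_forall_eventually_or
    (fun (a : J × ℕ) i ↦ f a.1 i = f a.1 a.2) hA
  refine ⟨B, hBA, hB, fun j ↦ or_iff_not_imp_left.2 fun hj ↦ ?_⟩
  have hne (i₀ : ℕ) : ∀ᶠ i in atTop ⊓ 𝓟 B, f j i ≠ f j i₀ := (h (j, i₀)).resolve_left fun heq ↦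
    hj (.congr (.const (f j i₀)) (heq.mono fun _ ↦ Eq.symm))
  refine le_cofinite_iff_eventually_ne.2 fun x ↦ eventually_map.2 ?_
  by_cases hx : x ∈ range (f j)
  · obtain ⟨i₀, rfl⟩ := hx
    exact hne i₀
  · exact .of_forall fun i hi ↦ hx ⟨i, hi⟩

lemma exists_infinite_subset_forall_mem_span_eventuallyConst_or_tendsto [Countable K] {J : Type*}
    [Countable J] (f : J → ℕ → V) (hA : A.Infinite) : ∃ B ⊆ A, B.Infinite ∧
      ∀ u ∈ Submodule.span K (range f),
        EventuallyConst u (atTop ⊓ 𝓟 B) ∨ Tendsto u (atTop ⊓ 𝓟 B) cofinite := by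
  obtain ⟨B, hBA, hB, h⟩ := exists_infinite_subset_forall_eventuallyConst_or_tendsto
    (Finsupp.linearCombination K f) hA
  refine ⟨B, hBA, hB, fun u hu ↦ ?_⟩
  rw [← Finsupp.range_linearCombination] at hu
  obtain ⟨a, rfl⟩ := hu
  exact h a

variable (K) in
/-- A function `g` of increasing `n`-tuples is *dual-monochromatic* on `A` if for every functional
`χ` there is a finite colouring of `ℕ` such that `χ ∘ g` is constant on the increasing tuples inside
each colour class that meets `A` in an infinite set. This weak form of continuity passes on to the
parts of `g` when variables are separated. The colours live in the universe of `K`, so that a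
colouring can be refined by the values of a functional. -/
def DualMonochromatic (g : (Fin n → ℕ) → V) (A : Set ℕ) : Prop :=
  ∀ χ : Module.Dual K V, ∃ (κ : Type u) (_ : Finite κ) (c : ℕ → κ),
    ∀ l, (A ∩ c ⁻¹' {l}).Infinite → ∃ r, ∀ s ∈ increasingTuples (A ∩ c ⁻¹' {l}) n, χ (g s) = r

namespace DualMonochromatic

lemma mono {B : Set ℕ} {g : (Fin n → ℕ) → V} (hg : DualMonochromatic K g A) (hBA : B ⊆ A) :
    DualMonochromatic K g B := fun χ ↦ by
  obtain ⟨κ, _, c, hc⟩ := hg χ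
  refine ⟨κ, ‹_›, c, fun l hl ↦ ?_⟩
  have hsub : B ∩ c ⁻¹' {l} ⊆ A ∩ c ⁻¹' {l} := inter_subset_inter_left _ hBA
  obtain ⟨r, hr⟩ := hc l (hl.mono hsub)
  exact ⟨r, fun s hs ↦ hr s (increasingTuples_mono hsub hs)⟩

lemma of_snoc_eq_add [Finite K] {g : (Fin (n + 1) → ℕ) → V} {v : (Fin n → ℕ) → V} {b : ℕ → V}
    (hg : DualMonochromatic K g A)
    (hvb : ∀ s i, Fin.snoc s i ∈ increasingTuples A (n + 1) → g (Fin.snoc s i) = v s + b i) :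
    DualMonochromatic K v A := fun χ ↦ by
  obtain ⟨κ, _, c, hc⟩ := hg χ
  refine ⟨κ × K, inferInstance, fun i ↦ (c i, χ (b i)), fun ⟨l, x⟩ hlx ↦ ?_⟩
  set A' := A ∩ (fun i ↦ (c i, χ (b i))) ⁻¹' {(l, x)}
  have hsub : A' ⊆ A ∩ c ⁻¹' {l} := inter_subset_inter_right _ fun i hi ↦ congrArg Prod.fst hi
  obtain ⟨r, hr⟩ := hc l (hlx.mono hsub)
  refine ⟨r - x, fun s hs ↦ ?_⟩
  obtain ⟨i, hi, hsi⟩ := ((Nat.frequently_atTop_iff_infinite.2 hlx).and_eventually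
    (eventually_forall_apply_lt s)).exists
  have hsnoc : Fin.snoc s i ∈ increasingTuples A' (n + 1) :=
    snoc_mem_increasingTuples.2 ⟨hs, hi, hsi⟩
  have hbi : χ (b i) = x := congrArg Prod.snd hi.2
  have hχ := hr _ (increasingTuples_mono hsub hsnoc)
  rw [hvb s i (increasingTuples_mono inter_subset_left hsnoc), map_add, hbi] at hχ
  exact eq_sub_of_add_eq hχ

lemma exists_infinite_subset_finite_germs [Finite K] {g : (Fin (n + 1) → ℕ) → V}
    (hg : DualMonochromatic K g A) (hA : A.Infinite)
    (hspan : ∀ u ∈ Submodule.span K (range fun s i ↦ g (Fin.snoc s i)),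
      EventuallyConst u (atTop ⊓ 𝓟 A) ∨ Tendsto u (atTop ⊓ 𝓟 A) cofinite) :
    ∃ B ⊆ A, B.Infinite ∧ ((fun s ↦ (eventuallyConstSubmodule K V (atTop ⊓ 𝓟 A)).mkQ
      fun i ↦ g (Fin.snoc s i)) '' increasingTuples B n).Finite := by
  -- A generic `χ` takes the values `r l + 1` for all colours `l` simultaneously at some large `i`,
  -- while the colour `l = c i` allows only the value `r l`.
  by_contra! hinf
  have := neBot_atTop_inf_principal hA
  obtain ⟨χ, hχ⟩ := exists_dual_frequently_apply_eq hspan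
  obtain ⟨κ, _, c, hc⟩ := hg χ
  choose r hr using fun l : {l // (A ∩ c ⁻¹' {l}).Infinite} ↦ hc l l.2
  obtain ⟨y, hy, hymem⟩ := exists_linearIndependent_forall_mem (K := K)
    fun l : {l // (A ∩ c ⁻¹' {l}).Infinite} ↦ hinf (A ∩ c ⁻¹' {l.1}) inter_subset_left l.2
  choose s hs hsy using hymem
  obtain rfl : _ = y := funext hsy
  have hlarge : ∀ᶠ i in atTop ⊓ 𝓟 A, ∀ l k, s l k < i :=
    eventually_all.2 fun l ↦ (eventually_forall_apply_lt (s l)).filter_mono inf_le_left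
  have hmem : ∀ᶠ i in atTop ⊓ 𝓟 A, i ∈ A := mem_inf_of_right (mem_principal_self A)
  obtain ⟨i, hi, hil, hiA, hic⟩ := ((hχ _ s hy fun l ↦ r l + 1).and_eventually
    (hlarge.and (hmem.and (eventually_infinite_inter_fiber c A)))).exists
  have hri := hr ⟨c i, hic⟩ _ (snoc_mem_increasingTuples.2 ⟨hs _, ⟨hiA, rfl⟩, hil _⟩)
  exact one_ne_zero (left_eq_add.1 (hri.symm.trans (hi ⟨c i, hic⟩)))

lemma exists_infinite_subset_snoc_eq_add [Finite K] {g : (Fin (n + 1) → ℕ) → V}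
    (hg : DualMonochromatic K g A) (hA : A.Infinite) :
    ∃ B ⊆ A, B.Infinite ∧ ∃ (v : (Fin n → ℕ) → V) (b : ℕ → V),
      ∀ s i, Fin.snoc s i ∈ increasingTuples B (n + 1) → g (Fin.snoc s i) = v s + b i := by
  obtain ⟨A₁, hA₁A, hA₁, hspan⟩ :=
    exists_infinite_subset_forall_mem_span_eventuallyConst_or_tendsto (K := K)
      (fun (s : Fin n → ℕ) i ↦ g (Fin.snoc s i)) hA
  obtain ⟨A₂, hA₂₁, hA₂, hfin⟩ :=
    (hg.mono hA₁A).exists_infinite_subset_finite_germs hA₁ hspan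
  obtain ⟨A₃, hA₃₂, hA₃, y, hy⟩ :=
    exists_infinite_subset_eq_on_increasingTuples hfin hA₂ (mapsTo_image _ _)
  obtain ⟨s₀, hs₀⟩ := increasingTuples_nonempty (n := n) hA₃
  have hsplit : ∀ s ∈ increasingTuples A₃ n,
      ∃ v, ∀ᶠ i in atTop ⊓ 𝓟 A₁, g (Fin.snoc s i) = v + g (Fin.snoc s₀ i) := fun s hs ↦ by
    have hconst : EventuallyConst ((fun i ↦ g (Fin.snoc s i)) - fun i ↦ g (Fin.snoc s₀ i))
      (atTop ⊓ 𝓟 A₁) := (Submodule.Quotient.eq _).1 ((hy s hs).trans (hy s₀ hs₀).symm)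
    obtain ⟨v, hv⟩ := eventuallyConst_iff_exists_eventuallyEq.1 hconst
    exact ⟨v, hv.mono fun i hi ↦ sub_eq_iff_eq_add.1 hi⟩
  choose! v hv using hsplit
  have := neBot_atTop_inf_principal hA₃
  have hle : atTop ⊓ 𝓟 A₃ ≤ atTop ⊓ 𝓟 A₁ :=
    inf_le_inf_left _ (principal_mono.2 (hA₃₂.trans hA₂₁))
  obtain ⟨B, hB₃, hB, hvB⟩ := exists_infinite_subset_forall_of_eventually le_rfl
    fun s hs ↦ (hv s hs).filter_mono hle
  exact ⟨B, hB₃.trans (hA₃₂.trans (hA₂₁.trans hA₁A)), hB, v, _, hvB⟩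

theorem exists_infinite_subset_eq_add_sum [Finite K] {g : (Fin n → ℕ) → V}
    (hg : DualMonochromatic K g A) (hA : A.Infinite) :
    ∃ B ⊆ A, B.Infinite ∧ ∃ (v₀ : V) (d : Fin n → ℕ → V),
      ∀ s ∈ increasingTuples B n, g s = v₀ + ∑ k, d k (s k) := by
  induction n generalizing A with
  | zero => exact ⟨A, Subset.rfl, hA, g Fin.elim0, Fin.elim0, fun s _ ↦ by
      simp [Subsingleton.elim s Fin.elim0]⟩
  | succ n ih =>
    obtain ⟨A₁, hA₁A, hA₁, v, b, hvb⟩ := hg.exists_infinite_subset_snoc_eq_add hA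
    obtain ⟨B, hBA₁, hB, v₀, d, hd⟩ := ih ((hg.mono hA₁A).of_snoc_eq_add hvb) hA₁
    refine ⟨B, hBA₁.trans hA₁A, hB, v₀, Fin.snoc d b, fun s hs ↦ ?_⟩
    have hsnoc := hvb (Fin.init s) (s (Fin.last n))
    rw [Fin.snoc_init_self] at hsnoc
    rw [hsnoc (increasingTuples_mono hBA₁ hs), hd _ (init_mem_increasingTuples hs),
      Fin.sum_univ_castSucc]
    simp [Fin.init, add_assoc]

end DualMonochromatic

variable (K) in
/-- A function `g` of `2p`-tuples is *dual-balanced* if for every functional `χ` there are a finite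
colouring of `ℕ` and a value `r` such that `χ (g s) = r` whenever some `p` of the entries of `s`
have the colour of one number `i` and the other `p` the colour of a number `j`. Continuity for the
Bohr topologies is used only in this form. -/
def DualBalanced {p : ℕ} (g : (Fin (p + p) → ℕ) → V) : Prop :=
  ∀ χ : Module.Dual K V, ∃ (κ : Type u) (_ : Finite κ) (c : ℕ → κ) (r : K),
    ∀ S : Finset (Fin (p + p)), S.card = p → ∀ (i j : ℕ) (s : Fin (p + p) → ℕ),
      (∀ k, c (s k) = c (if k ∈ S then i else j)) → χ (g s) = r

namespace DualBalanced

variable {p : ℕ} {g : (Fin (p + p) → ℕ) → V}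

lemma dualMonochromatic (hg : DualBalanced K g) (A : Set ℕ) : DualMonochromatic K g A :=
  fun χ ↦ by
    obtain ⟨κ, _, c, r, hr⟩ := hg χ
    refine ⟨κ, ‹_›, c, fun l hl ↦ ⟨r, fun s hs ↦ ?_⟩⟩
    obtain ⟨S, -, hS⟩ := Finset.exists_subset_card_eq
      (s := (Finset.univ : Finset (Fin (p + p)))) (n := p) (by simp)
    obtain ⟨i, -, rfl⟩ := hl.nonempty
    exact hr S hS i i s fun k ↦ by simpa using (hs.2 k).2

lemma eventuallyConst_dual_sum [Finite K] (hg : DualBalanced K g) {v₀ : V}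
    {d : Fin (p + p) → ℕ → V} (hd : ∀ s ∈ increasingTuples A (p + p), g s = v₀ + ∑ k, d k (s k))
    {S : Finset (Fin (p + p))} (hS : S.card = p) (χ : Module.Dual K V) :
    EventuallyConst (fun i ↦ χ ((∑ k ∈ S, d k) i)) (atTop ⊓ 𝓟 A) := by
  rcases (atTop ⊓ 𝓟 A).eq_or_neBot with hbot | _
  · exact hbot ▸ .bot
  obtain ⟨κ, _, c, r, hr⟩ := hg χ
  have hclass := eventually_infinite_inter_fiber (fun i ↦ (c i, fun k ↦ χ (d k i))) A
  obtain ⟨j, hj⟩ := hclass.exists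
  refine eventuallyConst_iff_exists_eventuallyEq.2 ⟨r - χ v₀ - ∑ k ∈ Sᶜ, χ (d k j), ?_⟩
  filter_upwards [hclass] with i hi
  obtain ⟨s, hs, hsP⟩ := exists_strictMono_forall_mem (n := p + p)
    (P := fun k ↦ if k ∈ S then _ else _) fun k ↦ by split_ifs; exacts [hi, hj]
  have hsA : s ∈ increasingTuples A (p + p) := ⟨hs, fun k ↦ by
    have := hsP k
    split_ifs at this <;> exact this.1⟩
  have hsc (k) : c (s k) = c (if k ∈ S then i else j) ∧
      χ (d k (s k)) = χ (d k (if k ∈ S then i else j)) := by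
    have := hsP k
    split_ifs at this ⊢ <;>
      exact ⟨congrArg Prod.fst this.2, congrFun (congrArg Prod.snd this.2) k⟩
  have hsum := hr S hS i j s fun k ↦ (hsc k).1
  rw [hd s hsA, map_add, map_sum, ← Finset.sum_add_sum_compl S,
    Finset.sum_congr rfl fun k hk ↦ (hsc k).2.trans (by rw [if_pos hk]),
    Finset.sum_congr rfl fun k hk ↦ (hsc k).2.trans (by rw [if_neg (Finset.mem_compl.1 hk)])]
    at hsum
  rw [Finset.sum_apply, map_sum, ← hsum]
  abel

theorem exists_infinite_eq_on_increasingTuples [Finite K] (hg : DualBalanced K g)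
    (hpK : (p : K) ≠ 0) :
    ∃ A : Set ℕ, A.Infinite ∧ ∃ v, ∀ s ∈ increasingTuples A (p + p), g s = v := by
  obtain ⟨B, -, hB, v₀, d, hd⟩ :=
    (hg.dualMonochromatic univ).exists_infinite_subset_eq_add_sum infinite_univ
  have hp : 0 < p := Nat.pos_of_ne_zero fun h ↦ hpK (by rw [h, Nat.cast_zero])
  have hconst (k) : EventuallyConst (d k) (atTop ⊓ 𝓟 B) :=
    forall_mem_of_forall_sum_mem (E := eventuallyConstSubmodule K V (atTop ⊓ 𝓟 B))
      (by simpa using hp) hpK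
      (fun S hS ↦ eventuallyConst_of_forall_dual (hg.eventuallyConst_dual_sum hd hS)) k
  choose w hw using fun k ↦ eventuallyConst_iff_exists_eventuallyEq.1 (hconst k)
  have hw : ∀ᶠ i in atTop, i ∈ B → ∀ k, d k i = w k :=
    eventually_inf_principal.1 (eventually_all.2 hw)
  refine ⟨{i ∈ B | ∀ k, d k i = w k}, Nat.frequently_atTop_iff_infinite.1 <|
    ((Nat.frequently_atTop_iff_infinite.2 hB).and_eventually hw).mono fun i hi ↦
      ⟨hi.1, hi.2 hi.1⟩, v₀ + ∑ k, w k, fun s hs ↦ ?_⟩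
  rw [hd s (increasingTuples_mono (sep_subset _ _) hs),
    Finset.sum_congr rfl fun k _ ↦ (hs.2 k).2 k]

end DualBalanced

end Separation

section Bohr

variable {G : Type*} [AddCommGroup G]

lemma exists_forall_characters_eq_zero_imp_mem {O : Set G} (hO : O ∈ @nhds G (bohrTopology G) 0) :
    ∃ (m : ℕ) (χ : Fin m → G →+ AddCircle (1 : ℝ)), ∀ x, (∀ a, χ a x = 0) → x ∈ O := by
  rw [bohrTopology, nhds_iInf, mem_iInf] at hO
  obtain ⟨I, hI, N, hN, rfl⟩ := hO
  have := hI.to_subtype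
  obtain ⟨m, ⟨ε⟩⟩ := Finite.exists_equiv_fin I
  refine ⟨m, fun a ↦ ε.symm a, fun x hx ↦ mem_iInter.2 fun χ ↦ ?_⟩
  obtain ⟨t, ht, htN⟩ := (nhds_induced χ.1 (0 : G) ▸ mem_comap.1 <| hN χ)
  have hχx : χ.1 x = χ.1 0 := by simpa using hx (ε χ)
  exact htN (by rw [mem_preimage, hχx]; exact mem_of_mem_nhds ht)

lemma exists_coloring_sum_mem_of_balanced {p : ℕ} (hp : 0 < p) {x : ℕ → G}
    (hx : ∀ i, p • x i = 0) {O : Set G} (hO : O ∈ @nhds G (bohrTopology G) 0) :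
    ∃ (κ : Type) (_ : Finite κ) (c : ℕ → κ), ∀ S : Finset (Fin (p + p)), S.card = p →
      ∀ (i j : ℕ) (s : Fin (p + p) → ℕ), (∀ k, c (s k) = c (if k ∈ S then i else j)) →
        ∑ k, x (s k) ∈ O := by
  obtain ⟨m, χ, hχ⟩ := exists_forall_characters_eq_zero_imp_mem hO
  have := (AddCircle.finite_torsion (1 : ℝ) hp).to_subtype
  have htorsion (a i) : p • χ a (x i) = 0 := by rw [← map_nsmul, hx, map_zero]
  refine ⟨Fin m → {y : AddCircle (1 : ℝ) | p • y = 0}, inferInstance,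
    fun i a ↦ ⟨χ a (x i), htorsion a i⟩, fun S hS i j s hs ↦ hχ _ fun a ↦ ?_⟩
  have hsa (k) : χ a (x (s k)) = χ a (x (if k ∈ S then i else j)) :=
    congrArg Subtype.val (congrFun (hs k) a)
  rw [map_sum, ← Finset.sum_add_sum_compl S,
    Finset.sum_congr rfl fun k hk ↦ (hsa k).trans (by rw [if_pos hk]),
    Finset.sum_congr rfl fun k hk ↦ (hsa k).trans (by rw [if_neg (Finset.mem_compl.1 hk)])]
  simp [Finset.card_compl, hS, htorsion]

variable {q : ℕ} [Module (ZMod q) G]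

lemma isOpen_bohrTopology_dual_fiber [NeZero q] (χ : Module.Dual (ZMod q) G) (r : ZMod q) :
    IsOpen[bohrTopology G] {y | χ y = r} := by
  let ψ : G →+ AddCircle (1 : ℝ) := ZMod.toAddCircle.comp χ.toAddMonoidHom
  have hψ : bohrTopology G ≤ .induced ψ inferInstance := iInf_le _ ψ
  refine hψ _ (isOpen_induced_iff.2 ⟨(ZMod.toAddCircle '' {a : ZMod q | a ≠ r})ᶜ,
    (toFinite _).isClosed.isOpen_compl, ?_⟩)
  ext y
  simp [ψ, ZMod.toAddCircle_inj]

lemma dualBalanced_of_continuousAt [Fact q.Prime] {H : Type*} [AddCommGroup H] {f : H → G}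
    (hf : @ContinuousAt _ _ (bohrTopology H) (bohrTopology G) f 0) {p : ℕ} (hp : 0 < p)
    {x : ℕ → H} (hx : ∀ i, p • x i = 0) :
    DualBalanced (ZMod q) fun s : Fin (p + p) → ℕ ↦ f (∑ k, x (s k)) := fun χ ↦ by
  let := bohrTopology G
  have hfiber : {y | χ y = χ (f 0)} ∈ 𝓝 (f 0) :=
    (isOpen_bohrTopology_dual_fiber χ (χ (f 0))).mem_nhds rfl
  obtain ⟨κ, hκ, c, hc⟩ := exists_coloring_sum_mem_of_balanced hp hx (hf hfiber)
  exact ⟨κ, hκ, c, χ (f 0), hc⟩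

end Bohr

lemma range_subset_of_sum_single_eq {κ ι R : Type*} [Fintype κ] [Semiring R] [Nontrivial R]
    {s t : κ → ι} (hs : Function.Injective s)
    (hst : ∑ k, Finsupp.single (s k) (1 : R) = ∑ k, Finsupp.single (t k) 1) :
    range s ⊆ range t := by
  classical
  rintro _ ⟨k, rfl⟩
  by_contra hk
  have heval := DFunLike.congr_fun hst (s k)
  simp only [Finsupp.finsetSum_apply, Finsupp.single_apply, hs.eq_iff] at heval
  rw [Finset.sum_eq_zero fun l _ ↦ if_neg fun h ↦ hk ⟨l, h⟩] at heval
  simp at heval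

theorem bohr_directSum_primes_not_homeomorphic_general {ι V : Type*} [Infinite ι]
    [AddCommGroup V] {p q : ℕ} [Fact q.Prime] [Module (ZMod q) V] (hp : p ≠ 1) (hqp : ¬ q ∣ p)
    {f : (ι →₀ ZMod p) → V}
    (hf : @ContinuousAt _ _ (bohrTopology (ι →₀ ZMod p)) (bohrTopology V) f 0) :
    ¬ Function.Injective f := fun hinj ↦ by
  have hp0 : 0 < p := Nat.pos_of_ne_zero fun h ↦ hqp (h ▸ dvd_zero q)
  have : Fact (1 < p) := ⟨by omega⟩
  let e := Infinite.natEmbedding ι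
  have hbal := dualBalanced_of_continuousAt (q := q) hf hp0
    (x := fun i ↦ Finsupp.single (e i) 1) fun i ↦ by simp [Finsupp.smul_single]
  obtain ⟨A, hA, v, hv⟩ := hbal.exists_infinite_eq_on_increasingTuples
    (mt (ZMod.natCast_eq_zero_iff p q).1 hqp)
  obtain ⟨s, hs⟩ := increasingTuples_nonempty (n := p + p) hA
  let k₀ : Fin (p + p) := ⟨0, by omega⟩
  obtain ⟨t, ht⟩ := increasingTuples_nonempty (n := p + p) (hA.sdiff (finite_Iic (s k₀)))
  have hst := hinj ((hv s hs).trans (hv t (increasingTuples_mono sdiff_subset ht)).symm)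
  obtain ⟨k, hk⟩ := range_subset_of_sum_single_eq (e.injective.comp hs.1.injective) hst ⟨k₀, rfl⟩
  exact (ht.2 k).2 (e.injective hk).le

/-- (Kunen) For distinct primes `p ≠ q`, the spaces `(⊕_ω ℤ/pℤ)^#` and `(⊕_ω ℤ/qℤ)^#`
are not homeomorphic. -/
theorem bohr_directSum_primes_not_homeomorphic (p q : ℕ) (hp : p.Prime) (hq : q.Prime)
    (hpq : p ≠ q) :
    letI := bohrTopology (ℕ →₀ ZMod p)
    letI := bohrTopology (ℕ →₀ ZMod q)
    IsEmpty ((ℕ →₀ ZMod p) ≃ₜ (ℕ →₀ ZMod q)) := by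
  let := bohrTopology (ℕ →₀ ZMod p)
  let := bohrTopology (ℕ →₀ ZMod q)
  have : Fact q.Prime := ⟨hq⟩
  have hqp : ¬ q ∣ p := fun h ↦ hpq ((Nat.prime_dvd_prime_iff_eq hq hp).1 h).symm
  exact ⟨fun f ↦ bohr_directSum_primes_not_homeomorphic_general hp.ne_one hqp
    f.continuous.continuousAt f.injective⟩
end
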